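/- Let n ≥ 1, ρ > 0, and let μ = exp(−V(x)) dx be a measure on Euclidean space ℝⁿ, where V : ℝⁿ → ℝ is smooth and the function x ↦ V(x) − (ρ/2)|x|² is convex (i.e. ∇²V ≥ ρ·Id, so that (ℝⁿ,|·|,μ) satisfies CD(ρ,∞)). Then for every k ≥ 1, λ_k^Lip(ℝⁿ,|·|,μ) ≥ λ_k^Lip(ℝⁿ,|·|,γ_ρⁿ). -/

import Mathlib

open MeasureTheory Filter Topology ENNReal

/-- The local Lipschitz constant `|∇f|(x) = limsup_{y→x} |f(y)-f(x)|/d(y,x)`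
(equal to `0` at isolated points, by the convention `Real.sInf ∅ = 0`). -/
noncomputable def localLip {Ω : Type*} [PseudoMetricSpace Ω] (f : Ω → ℝ) (x : Ω) : ℝ :=
  Filter.limsup (fun y => |f y - f x| / dist y x) (nhdsWithin x {x}ᶜ)

/-- Membership in the metric Sobolev space `W^{1,2}_Lip(Ω,d,μ)`. -/
def memW12Lip {Ω : Type*} [PseudoMetricSpace Ω] [MeasurableSpace Ω]
    (μ : Measure Ω) (f : Ω → ℝ) : Prop :=
  LocallyLipschitz f ∧
    (∫⁻ x, ENNReal.ofReal ((f x) ^ 2) ∂μ) + (∫⁻ x, ENNReal.ofReal ((localLip f x) ^ 2) ∂μ) < ⊤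

/-- The `k`-th metric eigenvalue `λ_k^Lip(Ω,d,μ)`: the infimum over `k`-dimensional
linear subspaces `F ⊆ W^{1,2}_Lip` of the supremum of the Rayleigh quotient over `F`. -/
noncomputable def lambdaLip {Ω : Type*} [PseudoMetricSpace Ω] [MeasurableSpace Ω]
    (μ : Measure Ω) (k : ℕ) : ℝ :=
  sInf { a : ℝ | ∃ F : Submodule ℝ (Ω → ℝ), Module.finrank ℝ F = k ∧
    (∀ f ∈ F, memW12Lip μ f) ∧
    a = sSup { r : ℝ | ∃ f ∈ F, (∫ x, (f x) ^ 2 ∂μ) ≠ 0 ∧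
      r = (∫ x, (localLip f x) ^ 2 ∂μ) / (∫ x, (f x) ^ 2 ∂μ) } }

/-- The Gaussian probability measure `γ_ρⁿ` on `ℝⁿ`, with density proportional to
`exp(-ρ|x|²/2)` with respect to Lebesgue measure, normalized to total mass one. -/
noncomputable def gaussRho (n : ℕ) (ρ : ℝ) : Measure (EuclideanSpace ℝ (Fin n)) :=
  ((volume.withDensity fun x : EuclideanSpace ℝ (Fin n) =>
      ENNReal.ofReal (Real.exp (-ρ * ‖x‖ ^ 2 / 2))) Set.univ)⁻¹ •
    volume.withDensity fun x : EuclideanSpace ℝ (Fin n) =>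
      ENNReal.ofReal (Real.exp (-ρ * ‖x‖ ^ 2 / 2))

/-- One-dimensional Brunn--Minkowski, compact case. -/
lemma bm_compact (K L : Set ℝ) (hK : IsCompact K) (hL : IsCompact L) (hKn : K.Nonempty)
    (hLn : L.Nonempty) (C : Set ℝ)
    (hC : ∀ x ∈ K, ∀ y ∈ L, (x + y) / 2 ∈ C) :
    volume K + volume L ≤ 2 * volume C := by
  obtain ⟨k, hk, hkm⟩ := hK.exists_isGreatest hKn
  obtain ⟨l, hl, hlm⟩ := hL.exists_isLeast hLn
  have h1 : volume ((fun x => x + -l) ⁻¹' K) = volume K := measure_preimage_add_right _ _ _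
  have h2 : volume ((fun x => x + -k) ⁻¹' L) = volume L := measure_preimage_add_right _ _ _
  have hKm : MeasurableSet ((fun x => x + -l) ⁻¹' K) :=
    (measurable_id.add_const _) hK.isClosed.measurableSet
  have h3 : volume ((fun x : ℝ => x * (2⁻¹ : ℝ)) ⁻¹' C) = 2 * volume C := by
    rw [Real.volume_preimage_mul_right (by norm_num)]
    simp
  rw [← h3, ← h1, ← h2]
  have hd : AEDisjoint volume ((fun x => x + -l) ⁻¹' K) ((fun x => x + -k) ⁻¹' L) := by
    refine measure_mono_null (t := {k + l}) ?_ (by simp)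
    rintro x ⟨hx1, hx2⟩
    have := hkm hx1
    have := hlm hx2
    simp only [Set.mem_singleton_iff]
    linarith
  rw [← measure_union₀' hKm.nullMeasurableSet hd]
  apply measure_mono
  rintro x (hx | hx)
  · have := hC _ hx _ hl
    simp only [Set.mem_preimage]
    convert this using 1
    ring
  · have := hC _ hk _ hx
    simp only [Set.mem_preimage]
    convert this using 1
    ring

lemma bm_one (A B C : Set ℝ) (hA : MeasurableSet A) (hB : MeasurableSet B)
    (hAn : A.Nonempty) (hBn : B.Nonempty)
    (hC : ∀ x ∈ A, ∀ y ∈ B, (x + y) / 2 ∈ C) :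
    volume A + volume B ≤ 2 * volume C := by
  have key : ∀ A : Set ℝ, MeasurableSet A → A.Nonempty → ∀ r < volume A,
      ∃ K ⊆ A, IsCompact K ∧ K.Nonempty ∧ r < volume K := by
    intro A hA _ r hr
    obtain ⟨K, hKA, hK, hrK⟩ := hA.exists_lt_isCompact hr
    refine ⟨K, hKA, hK, ?_, hrK⟩
    by_contra h
    rw [Set.not_nonempty_iff_eq_empty] at h
    simp [h] at hrK
  have key' : ∀ A : Set ℝ, MeasurableSet A → A.Nonempty → ∀ c d : ℝ≥0∞,
      (∀ K ⊆ A, IsCompact K → K.Nonempty → volume K + d ≤ c) → volume A + d ≤ c := by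
    intro A hA hAn c d h
    by_cases h0 : volume A = 0
    · obtain ⟨a, ha⟩ := hAn
      have := h {a} (by simpa using ha) isCompact_singleton (by simp)
      simpa [h0] using this
    · by_cases hd : d = ⊤
      · obtain ⟨a, ha⟩ := hAn
        have := h {a} (by simpa using ha) isCompact_singleton (by simp)
        simpa [hd] using this
      rw [← ENNReal.le_sub_iff_add_le_right hd]
      · apply le_of_forall_lt
        intro r hr
        obtain ⟨K, hKA, hK, hKn, hrK⟩ := key A hA hAn r hr
        exact lt_of_lt_of_le hrK (ENNReal.le_sub_of_add_le_right hd (h K hKA hK hKn))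
      · obtain ⟨a, ha⟩ := hAn
        have := h {a} (by simpa using ha) isCompact_singleton (by simp)
        simpa using this
  apply key' A hA hAn
  intro K hKA hK hKn
  rw [add_comm]
  apply key' B hB hBn
  intro L hLB hL hLn
  rw [add_comm]
  exact bm_compact K L hK hL hKn hLn C fun x hx y hy => hC x (hKA hx) y (hLB hy)

/-- normalized one-dimensional midpoint Prékopa--Leindler. -/
lemma pl_norm (f g h : ℝ → ℝ) (hf : Measurable f) (hg : Measurable g) (hh : Measurable h)
    (hf0 : ∀ x, 0 ≤ f x) (hg0 : ∀ x, 0 ≤ g x) (hh0 : ∀ x, 0 ≤ h x)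
    (hf1 : ∀ x, f x ≤ 1) (hg1 : ∀ x, g x ≤ 1)
    (hfs : ∀ t < 1, ∃ x, t < f x) (hgs : ∀ t < 1, ∃ x, t < g x)
    (H : ∀ x y, f x * g y ≤ h ((x + y) / 2) ^ 2) :
    (∫⁻ x, ENNReal.ofReal (f x)) + (∫⁻ x, ENNReal.ofReal (g x))
      ≤ 2 * ∫⁻ x, ENNReal.ofReal (h x) := by
  rw [lintegral_eq_lintegral_meas_lt volume (Eventually.of_forall hf0) hf.aemeasurable,
    lintegral_eq_lintegral_meas_lt volume (Eventually.of_forall hg0) hg.aemeasurable,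
    lintegral_eq_lintegral_meas_lt volume (Eventually.of_forall hh0) hh.aemeasurable]
  have hmeas : ∀ f : ℝ → ℝ, Measurable fun t : ℝ => volume {a : ℝ | t < f a} := fun f =>
    Antitone.measurable fun s t hst => measure_mono fun x hx => lt_of_le_of_lt hst hx
  rw [← lintegral_add_left (hmeas f), ← lintegral_const_mul _ (hmeas h)]
  apply lintegral_mono_ae
  filter_upwards [ae_restrict_mem measurableSet_Ioi] with t ht
  simp only [Set.mem_Ioi] at ht
  by_cases h1 : t < 1
  · apply bm_one
    · exact measurableSet_lt measurable_const hf
    · exact measurableSet_lt measurable_const hg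
    · exact hfs t h1
    · exact hgs t h1
    · intro x hx y hy
      simp only [Set.mem_ofPred_eq] at hx hy ⊢
      have := H x y
      have : t ^ 2 < h ((x + y) / 2) ^ 2 := by nlinarith
      exact lt_of_pow_lt_pow_left₀ 2 (hh0 _) this
  · have e1 : {a | t < f a} = ∅ := by
      ext x; simp only [Set.mem_ofPred_eq, Set.mem_empty_iff_false, iff_false]
      linarith [hf1 x]
    have e2 : {a | t < g a} = ∅ := by
      ext x; simp only [Set.mem_ofPred_eq, Set.mem_empty_iff_false, iff_false]
      linarith [hg1 x]
    simp [e1, e2]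

/-- Midpoint Prékopa--Leindler property. -/
def PLprop (E : Type*) [AddCommGroup E] [Module ℝ E] [MeasureSpace E] : Prop :=
  ∀ f g h : E → ℝ≥0∞, Measurable f → Measurable g → Measurable h →
    (∀ x y, f x * g y ≤ h ((1 / 2 : ℝ) • (x + y)) ^ 2) →
    (∫⁻ x, f x) * (∫⁻ x, g x) ≤ (∫⁻ x, h x) ^ 2

lemma pl_bdd (f g h : ℝ → ℝ) (hf : Measurable f) (hg : Measurable g) (hh : Measurable h)
    (hf0 : ∀ x, 0 ≤ f x) (hg0 : ∀ x, 0 ≤ g x) (hh0 : ∀ x, 0 ≤ h x) (N : ℝ)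
    (hf1 : ∀ x, f x ≤ N) (hg1 : ∀ x, g x ≤ N)
    (H : ∀ x y, f x * g y ≤ h ((x + y) / 2) ^ 2) :
    (∫⁻ x, ENNReal.ofReal (f x)) * (∫⁻ x, ENNReal.ofReal (g x))
      ≤ (∫⁻ x, ENNReal.ofReal (h x)) ^ 2 := by
  have hbf : BddAbove (Set.range f) := ⟨N, by rintro _ ⟨x, rfl⟩; exact hf1 x⟩
  have hbg : BddAbove (Set.range g) := ⟨N, by rintro _ ⟨x, rfl⟩; exact hg1 x⟩
  by_cases hz : ∀ x, f x = 0
  · simp [hz]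
  by_cases hz' : ∀ x, g x = 0
  · simp [hz']
  push Not at hz hz'
  obtain ⟨x0, hx0⟩ := hz
  obtain ⟨y0, hy0⟩ := hz'
  set a := sSup (Set.range f) with ha
  set b := sSup (Set.range g) with hb
  have fa : ∀ x, f x ≤ a := fun x => le_csSup hbf ⟨x, rfl⟩
  have gb : ∀ x, g x ≤ b := fun x => le_csSup hbg ⟨x, rfl⟩
  have ha0 : 0 < a := lt_of_lt_of_le (lt_of_le_of_ne (hf0 x0) hx0.symm) (fa x0)
  have hb0 : 0 < b := lt_of_lt_of_le (lt_of_le_of_ne (hg0 y0) hy0.symm) (gb y0)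
  have := pl_norm (fun x => f x / a) (fun x => g x / b) (fun x => h x / √(a * b))
    (hf.div_const _) (hg.div_const _) (hh.div_const _)
    (fun x => div_nonneg (hf0 x) ha0.le) (fun x => div_nonneg (hg0 x) hb0.le)
    (fun x => div_nonneg (hh0 x) (Real.sqrt_nonneg _))
    (fun x => by rw [div_le_one ha0]; exact fa x) (fun x => by rw [div_le_one hb0]; exact gb x)
    (fun t ht => by
      have : t * a < a := by nlinarith
      obtain ⟨_, ⟨x, rfl⟩, hx⟩ := exists_lt_of_lt_csSup (Set.range_nonempty f) this
      exact ⟨x, by rwa [lt_div_iff₀ ha0]⟩)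
    (fun t ht => by
      have : t * b < b := by nlinarith
      obtain ⟨_, ⟨x, rfl⟩, hx⟩ := exists_lt_of_lt_csSup (Set.range_nonempty g) this
      exact ⟨x, by rwa [lt_div_iff₀ hb0]⟩)
    (fun x y => by
      rw [div_pow, Real.sq_sqrt (by positivity), div_mul_div_comm]
      gcongr
      exact H x y)
  by_cases hI : (∫⁻ x, ENNReal.ofReal (h x)) = ⊤
  · simp [hI]
  have conv : ∀ (u : ℝ → ℝ) (c : ℝ), Measurable u → 0 < c → (∫⁻ x, ENNReal.ofReal (u x / c))
      = (∫⁻ x, ENNReal.ofReal (u x)) * ENNReal.ofReal c⁻¹ := by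
    intro u c hu hc
    rw [← lintegral_mul_const _ hu.ennreal_ofReal]
    congr 1; ext x
    rw [div_eq_mul_inv, ENNReal.ofReal_mul' (by positivity)]
  have hab : 0 < √(a * b) := by positivity
  rw [conv f a hf ha0, conv g b hg hb0, conv h _ hh hab] at this
  set A := ∫⁻ x, ENNReal.ofReal (f x)
  set B := ∫⁻ x, ENNReal.ofReal (g x)
  set C := ∫⁻ x, ENNReal.ofReal (h x)
  have hR : 2 * (C * ENNReal.ofReal (√(a * b))⁻¹) ≠ ⊤ := by finiteness
  have hAt : A ≠ ⊤ := by
    intro h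
    rw [h, ENNReal.top_mul (by simpa using ha0)] at this
    simp at this; exact hR this
  have hBt : B ≠ ⊤ := by
    intro h
    rw [h, ENNReal.top_mul (by simpa using hb0)] at this
    simp at this; exact hR this
  lift A to NNReal using hAt with A'
  lift B to NNReal using hBt with B'
  lift C to NNReal using hI with C'
  have h2 : (A' : ℝ) / a + B' / b ≤ 2 * (C' / √(a * b)) := by
    have := ENNReal.toReal_mono hR this
    rw [ENNReal.toReal_add (by finiteness) (by finiteness)] at this
    simp only [ENNReal.toReal_mul, ENNReal.coe_toReal, ENNReal.toReal_ofNat] at this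
    rw [ENNReal.toReal_ofReal (by positivity), ENNReal.toReal_ofReal (by positivity),
      ENNReal.toReal_ofReal (by positivity)] at this
    simpa [div_eq_mul_inv] using this
  have h3 : (A' : ℝ) * B' ≤ C' ^ 2 := by
    have p : 0 ≤ (A' : ℝ) / a + B' / b := by positivity
    have q := pow_le_pow_left₀ p h2 2
    have r : (A' : ℝ) / a * (B' / b) ≤ (C' / √(a * b)) ^ 2 := by
      nlinarith [sq_nonneg ((A' : ℝ) / a - B' / b)]
    rw [div_pow, Real.sq_sqrt (by positivity), div_mul_div_comm] at r
    exact (div_le_div_iff_of_pos_right (by positivity)).1 r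
  exact_mod_cast h3

lemma pl_real : PLprop ℝ := by
  intro f g h hf hg hh H
  have trunc : ∀ u : ℝ → ℝ≥0∞, Measurable u → ∫⁻ x, u x = ⨆ N : ℕ, ∫⁻ x, min (u x) N := by
    intro u hu
    rw [← lintegral_iSup]
    · congr 1; ext x
      rw [← inf_iSup_eq, ENNReal.iSup_natCast, inf_top_eq]
    · intro N; exact hu.min measurable_const
    · intro N M hNM x
      exact min_le_min le_rfl (by exact_mod_cast hNM)
  rw [trunc f hf, trunc g hg, ENNReal.iSup_mul]
  apply iSup_le
  intro i
  rw [ENNReal.mul_iSup]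
  apply iSup_le
  intro j
  set N : ℕ := max i j
  have hij : (∫⁻ x, min (f x) (i : ℝ≥0∞)) * (∫⁻ x, min (g x) (j : ℝ≥0∞)) ≤
      (∫⁻ x, min (f x) (N : ℝ≥0∞)) * (∫⁻ x, min (g x) (N : ℝ≥0∞)) :=
    mul_le_mul' (lintegral_mono fun x => min_le_min le_rfl (by simp [N]))
      (lintegral_mono fun x => min_le_min le_rfl (by simp [N]))
  refine hij.trans ?_
  have := pl_bdd (fun x => (min (f x) N).toReal) (fun x => (min (g x) N).toReal)
    (fun x => (min (h x) N).toReal) (hf.min measurable_const).ennreal_toReal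
    (hg.min measurable_const).ennreal_toReal (hh.min measurable_const).ennreal_toReal
    (fun _ => ENNReal.toReal_nonneg) (fun _ => ENNReal.toReal_nonneg)
    (fun _ => ENNReal.toReal_nonneg) N
    (fun x => by
      have := ENNReal.toReal_mono (by simp) (min_le_right (f x) (N : ℝ≥0∞)); simpa using this)
    (fun x => by
      have := ENNReal.toReal_mono (by simp) (min_le_right (g x) (N : ℝ≥0∞)); simpa using this)
    (fun x y => by
      rw [← ENNReal.toReal_mul, ← ENNReal.toReal_pow]
      apply ENNReal.toReal_mono
      · exact ENNReal.pow_ne_top (ne_top_of_le_ne_top (by simp) (min_le_right _ (N : ℝ≥0∞)))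
      · have e : (x + y) / 2 = (1 / 2 : ℝ) • (x + y) := by simp; ring
        rw [e]
        rcases le_total (h ((1 / 2 : ℝ) • (x + y))) N with h1 | h1
        · rw [min_eq_left h1]
          exact (mul_le_mul' (min_le_left _ _) (min_le_left _ _)).trans (H x y)
        · rw [min_eq_right h1, sq]
          exact mul_le_mul' (min_le_right _ _) (min_le_right _ _))
  have e : ∀ u : ℝ → ℝ≥0∞, ∀ x, ENNReal.ofReal (min (u x) N).toReal = min (u x) N := fun u x =>
    ENNReal.ofReal_toReal (ne_top_of_le_ne_top (by simp) (min_le_right _ (N : ℝ≥0∞)))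
  simp only [e] at this
  refine this.trans ?_
  gcongr
  exact min_le_left _ _

lemma pl_prod {E F : Type*} [AddCommGroup E] [Module ℝ E] [MeasureSpace E]
    [AddCommGroup F] [Module ℝ F] [MeasureSpace F] [SFinite (volume : Measure F)]
    [SFinite (volume : Measure E)]
    (hE : PLprop E) (hF : PLprop F) : PLprop (E × F) := by
  intro f g h hf hg hh H
  rw [Measure.volume_eq_prod, lintegral_prod _ hf.aemeasurable, lintegral_prod _ hg.aemeasurable,
    lintegral_prod _ hh.aemeasurable]
  apply hE _ _ _ hf.lintegral_prod_right' hg.lintegral_prod_right' hh.lintegral_prod_right'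
  intro x x'
  apply hF _ _ _ (hf.comp measurable_prodMk_left) (hg.comp measurable_prodMk_left)
    (hh.comp measurable_prodMk_left)
  intro y y'
  exact H (x, y) (x', y')

lemma pl_equiv {E F : Type*} [AddCommGroup E] [Module ℝ E] [MeasureSpace E]
    [AddCommGroup F] [Module ℝ F] [MeasureSpace F] (e : E ≃ᵐ F) (he : MeasurePreserving e)
    (hl : ∀ x y, e.symm ((1 / 2 : ℝ) • (x + y)) = (1 / 2 : ℝ) • (e.symm x + e.symm y))
    (hF : PLprop F) : PLprop E := by
  intro f g h hf hg hh H
  have c : ∀ u : E → ℝ≥0∞, Measurable u → ∫⁻ x, u x = ∫⁻ y, u (e.symm y) := by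
    intro u hu
    rw [(he.symm e).lintegral_comp hu]
  rw [c f hf, c g hg, c h hh]
  apply hF _ _ _ (hf.comp e.symm.measurable) (hg.comp e.symm.measurable)
    (hh.comp e.symm.measurable)
  intro x y
  simpa only [hl, Function.comp] using H (e.symm x) (e.symm y)

lemma pl_pi (n : ℕ) : PLprop (Fin n → ℝ) := by
  induction n with
  | zero =>
    intro f g h hf hg hh H
    simp only [lintegral_unique]
    have : (volume : Measure (Fin 0 → ℝ)) Set.univ = 1 := by
      rw [volume_pi, Measure.pi_of_empty]; simp
    rw [this]
    have := H default default
    rw [Subsingleton.elim ((1 / 2 : ℝ) • ((default : Fin 0 → ℝ) + default)) default] at this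
    simp only [mul_one]
    convert this
  | succ n ih =>
    refine pl_equiv (MeasurableEquiv.piFinSuccAbove (fun _ => ℝ) 0)
      (volume_preserving_piFinSuccAbove (fun _ => ℝ) 0) ?_ (pl_prod pl_real ih)
    intro x y
    ext i
    refine Fin.cases ?_ (fun j => ?_) i <;>
      simp [MeasurableEquiv.piFinSuccAbove, Fin.insertNthEquiv] <;> ring

lemma pl_euclid (n : ℕ) : PLprop (EuclideanSpace ℝ (Fin n)) := by
  refine pl_equiv (MeasurableEquiv.toLp 2 (Fin n → ℝ)).symm
    (EuclideanSpace.volume_preserving_symm_measurableEquiv_toLp (Fin n)) ?_ (pl_pi n)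
  intro x y
  rfl

abbrev Eu (n : ℕ) := EuclideanSpace ℝ (Fin n)

/-- Abstract smooth/convex duality: a subgradient field of `L` with `L - a/2|x|²` midpoint
concave. -/
lemma abs_sup {n : ℕ} (L : Eu n → ℝ) (S : Eu n → Eu n) (a : ℝ)
    (h1 : ∀ x v, L x + inner ℝ v (S x) ≤ L (x + v))
    (h2 : ∀ x v, (L (x + v) - a / 2 * ‖x + v‖ ^ 2) + (L (x - v) - a / 2 * ‖x - v‖ ^ 2)
      ≤ 2 * (L x - a / 2 * ‖x‖ ^ 2)) (x v : Eu n) :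
    L (x + v) ≤ L x + inner ℝ v (S x) + a / 2 * ‖v‖ ^ 2 := by
  set M : Eu n → ℝ := fun x => L x - a / 2 * ‖x‖ ^ 2 with hM
  have hd : ∀ v, M (x + v) - M x ≤ 2 * (M (x + (1 / 2 : ℝ) • v) - M x) := by
    intro v
    have := h2 (x + (1 / 2 : ℝ) • v) ((1 / 2 : ℝ) • v)
    have e1 : x + (1 / 2 : ℝ) • v + (1 / 2 : ℝ) • v = x + v := by
      rw [add_assoc, ← add_smul]; norm_num
    have e2 : x + (1 / 2 : ℝ) • v - (1 / 2 : ℝ) • v = x := by abel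
    rw [e1, e2] at this
    simp only [hM] at *
    linarith
  have hk : ∀ k : ℕ, M (x + v) - M x ≤ 2 ^ k * (M (x + ((1 / 2 : ℝ) ^ k) • v) - M x) := by
    intro k
    induction k with
    | zero => simp
    | succ k ih =>
      have := hd (((1 / 2 : ℝ) ^ k) • v)
      rw [smul_smul, ← pow_succ'] at this
      calc _ ≤ _ := ih
        _ ≤ 2 ^ k * (2 * (M (x + ((1 / 2 : ℝ) ^ (k + 1)) • v) - M x)) := by gcongr
        _ = _ := by ring
  have hk2 : ∀ k : ℕ, M (x + v) - M x ≤ inner ℝ v (S x) - a * inner ℝ x v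
      + (1 / 2 : ℝ) ^ k * (a / 2 * ‖v‖ ^ 2) := by
    intro k
    set t : ℝ := (1 / 2 : ℝ) ^ k with ht
    have htp : (2 : ℝ) ^ k * t = 1 := by rw [ht, ← mul_pow]; norm_num
    have a1 := h2 x (t • v)
    have a2 := h1 x (-(t • v))
    rw [← sub_eq_add_neg, inner_neg_left, inner_smul_left] at a2
    have a3 : ‖x - t • v‖ ^ 2 = ‖x‖ ^ 2 - 2 * (t * inner ℝ x v) + t ^ 2 * ‖v‖ ^ 2 := by
      rw [norm_sub_sq_real, inner_smul_right, norm_smul, mul_pow, Real.norm_eq_abs, sq_abs]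
    have a4 : M (x + t • v) - M x ≤ t * (inner ℝ v (S x) - a * inner ℝ x v
        + t * (a / 2 * ‖v‖ ^ 2)) := by
      simp only [hM]
      rw [a3] at a1
      simp only [conj_trivial] at a2
      nlinarith
    calc _ ≤ _ := hk k
      _ ≤ 2 ^ k * (t * (inner ℝ v (S x) - a * inner ℝ x v + t * (a / 2 * ‖v‖ ^ 2))) := by gcongr
      _ = _ := by rw [← mul_assoc, htp, one_mul]
  have hlim : Tendsto (fun k : ℕ => inner ℝ v (S x) - a * inner ℝ x v
      + (1 / 2 : ℝ) ^ k * (a / 2 * ‖v‖ ^ 2)) atTop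
      (𝓝 (inner ℝ v (S x) - a * inner ℝ x v + 0 * (a / 2 * ‖v‖ ^ 2))) :=
    tendsto_const_nhds.add ((_root_.tendsto_pow_atTop_nhds_zero_of_lt_one (by norm_num)
      (by norm_num)).mul_const _)
  have := ge_of_tendsto' hlim hk2
  simp only [hM, norm_add_sq_real] at this
  linarith

lemma abs_lip {n : ℕ} (L : Eu n → ℝ) (S : Eu n → Eu n) (a : ℝ) (ha : 0 < a)
    (h1 : ∀ x v, L x + inner ℝ v (S x) ≤ L (x + v))
    (h2 : ∀ x v, (L (x + v) - a / 2 * ‖x + v‖ ^ 2) + (L (x - v) - a / 2 * ‖x - v‖ ^ 2)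
      ≤ 2 * (L x - a / 2 * ‖x‖ ^ 2)) (x y : Eu n) :
    ‖S x - S y‖ ≤ a * ‖x - y‖ := by
  have co : ∀ x y, L y - L x ≤ inner ℝ (y - x) (S y) - ‖S x - S y‖ ^ 2 / (2 * a) := by
    intro x y
    set D := S x - S y with hD
    set w : Eu n := -(a⁻¹ • D) with hw
    have b1 := abs_sup L S a h1 h2 x w
    have b2 := h1 y (x + w - y)
    have e : y + (x + w - y) = x + w := by abel
    rw [e] at b2
    have e2 : inner ℝ (x + w - y) (S y) = inner ℝ w (S y) - inner ℝ (y - x) (S y) := by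
      rw [← inner_sub_left]; congr 1; abel
    have e3 : inner ℝ w (S x) - inner ℝ w (S y) = - (‖D‖ ^ 2 / a) := by
      rw [← inner_sub_right, ← hD, hw, inner_neg_left, inner_smul_left,
        real_inner_self_eq_norm_sq]
      simp; ring
    have e4 : ‖w‖ ^ 2 = ‖D‖ ^ 2 / a ^ 2 := by
      rw [hw, norm_neg, norm_smul, mul_pow, Real.norm_eq_abs, sq_abs]; field_simp
    rw [e4] at b1
    have e5 : a / 2 * (‖D‖ ^ 2 / a ^ 2) = ‖D‖ ^ 2 / (2 * a) := by field_simp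
    have e6 : ‖D‖ ^ 2 / a = 2 * (‖D‖ ^ 2 / (2 * a)) := by field_simp
    linarith
  have c1 := co x y
  have c2 := co y x
  have c3 : inner ℝ (y - x) (S y) + inner ℝ (x - y) (S x) = inner ℝ (x - y) (S x - S y) := by
    rw [inner_sub_right, ← neg_sub x y, inner_neg_left]; ring
  have c4 := real_inner_le_norm (x - y) (S x - S y)
  rw [norm_sub_rev (S y) (S x)] at c2
  have e6 : ‖S x - S y‖ ^ 2 / (2 * a) + ‖S x - S y‖ ^ 2 / (2 * a) = ‖S x - S y‖ ^ 2 / a := by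
    field_simp; ring
  have c5 : ‖S x - S y‖ ^ 2 / a ≤ ‖x - y‖ * ‖S x - S y‖ := by linarith
  rw [div_le_iff₀ ha] at c5
  by_cases h0 : ‖S x - S y‖ = 0
  · rw [h0]; positivity
  · have : 0 < ‖S x - S y‖ := lt_of_le_of_ne (norm_nonneg _) (Ne.symm h0)
    nlinarith

/-- Gaussian domination. -/
def GD {n : ℕ} (ρ : ℝ) (G : Eu n → ℝ) : Prop :=
  Measurable G ∧ (∀ y, 0 < G y) ∧
    ∃ C R : ℝ, ∀ y, G y ≤ C * Real.exp (-(ρ / 2) * ‖y‖ ^ 2 + R * ‖y‖)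

/-- exponential growth weights -/
def EG {n : ℕ} (h : Eu n → ℝ) : Prop :=
  Measurable h ∧ ∃ C R : ℝ, ∀ y, |h y| ≤ C * Real.exp (R * ‖y‖)

lemma gauss_int {n : ℕ} {ρ : ℝ} (hρ : 0 < ρ) :
    Integrable (fun y : Eu n => Real.exp (-ρ * ‖y‖ ^ 2)) := by
  have := (GaussianFourier.integrable_cexp_neg_mul_sq_norm_add (V := Eu n) (b := (ρ : ℂ))
    (by simpa using hρ) 0 0).norm
  refine this.congr (Eventually.of_forall fun y => ?_)
  simp only [Complex.norm_exp]
  congr 1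
  simp [← Complex.ofReal_pow]

lemma gauss_int' {n : ℕ} {ρ : ℝ} (hρ : 0 < ρ) (R : ℝ) :
    Integrable (fun y : Eu n => Real.exp (-ρ * ‖y‖ ^ 2 + R * ‖y‖)) := by
  refine ((gauss_int (n := n) (half_pos hρ)).const_mul (Real.exp (R ^ 2 / (2 * ρ)))).mono'
    (by fun_prop) (Eventually.of_forall fun y => ?_)
  rw [Real.norm_eq_abs, Real.abs_exp, ← Real.exp_add, Real.exp_le_exp]
  have : R ^ 2 / (2 * ρ) + -(ρ / 2) * ‖y‖ ^ 2 - (-ρ * ‖y‖ ^ 2 + R * ‖y‖)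
      = (ρ * ‖y‖ - R) ^ 2 / (2 * ρ) := by field_simp; ring
  have h2 : 0 ≤ (ρ * ‖y‖ - R) ^ 2 / (2 * ρ) := by positivity
  linarith

lemma GD.integrable {n : ℕ} {ρ : ℝ} (hρ : 0 < ρ) {G h : Eu n → ℝ} (hG : GD ρ G) (hh : EG h) :
    Integrable (fun y => G y * h y) := by
  obtain ⟨hGm, hG0, C, R, hC⟩ := hG
  obtain ⟨hhm, C', R', hC'⟩ := hh
  refine ((gauss_int' (n := n) (half_pos hρ) (R + R')).const_mul (C * C')).mono'
    (hGm.mul hhm).aestronglyMeasurable (Eventually.of_forall fun y => ?_)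
  rw [Real.norm_eq_abs, abs_mul, abs_of_pos (hG0 y)]
  calc G y * |h y| ≤ (C * Real.exp (-(ρ / 2) * ‖y‖ ^ 2 + R * ‖y‖)) * (C' * Real.exp (R' * ‖y‖)) :=
        mul_le_mul (hC y) (hC' y) (abs_nonneg _) ((hG0 y).le.trans (hC y))
    _ = C * C' * (Real.exp (-(ρ / 2) * ‖y‖ ^ 2 + R * ‖y‖) * Real.exp (R' * ‖y‖)) := by ring
    _ = _ := by rw [← Real.exp_add]; ring_nf

lemma EG.mul {n : ℕ} {h k : Eu n → ℝ} (hh : EG h) (hk : EG k) : EG (fun y => h y * k y) := by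
  obtain ⟨m, C, R, hC⟩ := hh
  obtain ⟨m', C', R', hC'⟩ := hk
  refine ⟨m.mul m', C * C', R + R', fun y => ?_⟩
  rw [abs_mul, add_mul, Real.exp_add, mul_mul_mul_comm]
  exact mul_le_mul (hC y) (hC' y) (abs_nonneg _) ((abs_nonneg _).trans (hC y))

lemma EG.nonnegC {n : ℕ} {h : Eu n → ℝ} (hh : EG h) : ∃ C R : ℝ, 0 ≤ C ∧ 0 ≤ R ∧
    ∀ y, |h y| ≤ C * Real.exp (R * ‖y‖) := by
  obtain ⟨m, C, R, hC⟩ := hh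
  refine ⟨|C|, |R|, abs_nonneg _, abs_nonneg _, fun y => (hC y).trans ?_⟩
  gcongr <;> exact le_abs_self _

lemma EG.add {n : ℕ} {h k : Eu n → ℝ} (hh : EG h) (hk : EG k) : EG (fun y => h y + k y) := by
  obtain ⟨C, R, c0, r0, hC⟩ := hh.nonnegC
  obtain ⟨C', R', c0', r0', hC'⟩ := hk.nonnegC
  refine ⟨hh.1.add hk.1, C + C', R + R', fun y => ?_⟩
  have h1 : Real.exp (R * ‖y‖) ≤ Real.exp ((R + R') * ‖y‖) := by gcongr; linarith
  have h2 : Real.exp (R' * ‖y‖) ≤ Real.exp ((R + R') * ‖y‖) := by gcongr; linarith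
  calc |h y + k y| ≤ |h y| + |k y| := abs_add_le _ _
    _ ≤ C * Real.exp (R * ‖y‖) + C' * Real.exp (R' * ‖y‖) := add_le_add (hC y) (hC' y)
    _ ≤ C * Real.exp ((R + R') * ‖y‖) + C' * Real.exp ((R + R') * ‖y‖) := by gcongr
    _ = _ := by ring

lemma EG.of_le {n : ℕ} {h k : Eu n → ℝ} (hm : Measurable h) (hk : EG k) (hle : ∀ y, |h y| ≤ k y) :
    EG h := by
  obtain ⟨m', C', R', hC'⟩ := hk
  exact ⟨hm, C', R', fun y => (hle y).trans ((le_abs_self _).trans (hC' y))⟩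

lemma EG.const {n : ℕ} (c : ℝ) : EG (fun _ : Eu n => c) :=
  ⟨measurable_const, |c|, 0, fun y => by simp⟩

lemma EG.nrm {n : ℕ} : EG (fun y : Eu n => ‖y‖) :=
  ⟨measurable_norm, 1, 1, fun y => by
    rw [abs_norm, one_mul, one_mul]; linarith [Real.add_one_le_exp ‖y‖]⟩

lemma EG.inn {n : ℕ} (x : Eu n) : EG (fun y : Eu n => inner ℝ x y) :=
  EG.of_le (by fun_prop) ((EG.const ‖x‖).mul EG.nrm) fun y => abs_real_inner_le_norm x y

lemma EG.expi {n : ℕ} (b : ℝ) (x : Eu n) : EG (fun y : Eu n => Real.exp (b * inner ℝ x y)) :=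
  ⟨by fun_prop, 1, |b| * ‖x‖, fun y => by
    rw [Real.abs_exp, one_mul, Real.exp_le_exp]
    calc b * inner ℝ x y ≤ |b * inner ℝ x y| := le_abs_self _
      _ = |b| * |inner ℝ x y| := abs_mul _ _
      _ ≤ |b| * (‖x‖ * ‖y‖) := by gcongr; exact abs_real_inner_le_norm x y
      _ = _ := by ring⟩

noncomputable def hat {n : ℕ} (b : ℝ) (G : Eu n → ℝ) (x : Eu n) : ℝ :=
  ∫ y, G y * Real.exp (b * inner ℝ x y)

noncomputable def bar {n : ℕ} (b : ℝ) (G : Eu n → ℝ) (x : Eu n) : Eu n :=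
  (hat b G x)⁻¹ • ∫ y, (G y * Real.exp (b * inner ℝ x y)) • y

lemma hat_int {n : ℕ} {ρ : ℝ} (hρ : 0 < ρ) (b : ℝ) {G : Eu n → ℝ} (hG : GD ρ G)
    (x : Eu n) : Integrable (fun y => G y * Real.exp (b * inner ℝ x y)) :=
  hG.integrable hρ (EG.expi b x)

lemma int_pos {n : ℕ} {f : Eu n → ℝ} (hf : Integrable f) (h0 : ∀ x, 0 < f x) : 0 < ∫ x, f x := by
  rw [integral_pos_iff_support_of_nonneg (fun x => (h0 x).le) hf]
  have : Function.support f = Set.univ := by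
    ext x; simp [(h0 x).ne']
  rw [this]
  exact Measure.measure_univ_pos.2 (NeZero.ne _)

lemma hat_pos {n : ℕ} {ρ : ℝ} (hρ : 0 < ρ) (b : ℝ) {G : Eu n → ℝ} (hG : GD ρ G)
    (x : Eu n) : 0 < hat b G x :=
  int_pos (hat_int hρ b hG x) fun y => mul_pos (hG.2.1 y) (Real.exp_pos _)

lemma hat_meas {n : ℕ} {ρ : ℝ} (b : ℝ) {G : Eu n → ℝ} (hG : GD ρ G) :
    Measurable (hat b G) := by
  have hGm := hG.1
  have : Measurable (Function.uncurry fun x y : Eu n => G y * Real.exp (b * inner ℝ x y)) := by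
    unfold Function.uncurry; fun_prop
  exact this.stronglyMeasurable.integral_prod_right.measurable

lemma jensen_exp {α : Type*} [MeasurableSpace α] (ν : Measure α) (w h : α → ℝ) (hw : ∀ x, 0 ≤ w x)
    (i0 : Integrable w ν) (i1 : Integrable (fun x => w x * h x) ν)
    (i2 : Integrable (fun x => w x * Real.exp (h x)) ν) (hm : 0 < ∫ x, w x ∂ν) :
    (∫ x, w x ∂ν) * Real.exp ((∫ x, w x * h x ∂ν) / ∫ x, w x ∂ν)
      ≤ ∫ x, w x * Real.exp (h x) ∂ν := by
  set m := ∫ x, w x ∂ν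
  set z := (∫ x, w x * h x ∂ν) / m with hz
  have e : ∫ x, Real.exp z * (w x * h x + (1 - z) * w x) ∂ν = m * Real.exp z := by
    rw [integral_const_mul, integral_add i1 (i0.const_mul _), integral_const_mul]
    have : ∫ x, w x * h x ∂ν = m * z := by rw [hz]; field_simp
    rw [this]; ring
  rw [← e]
  apply integral_mono ((i1.add (i0.const_mul _)).const_mul _) i2
  intro x
  have h1 := Real.add_one_le_exp (h x - z)
  have h2 : Real.exp (h x) = Real.exp z * Real.exp (h x - z) := by rw [← Real.exp_add]; ring_nf
  simp only [h2, Pi.add_apply]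
  have := mul_le_mul_of_nonneg_left h1 (mul_nonneg (Real.exp_pos z).le (hw x))
  nlinarith

lemma bar_int {n : ℕ} {ρ : ℝ} (hρ : 0 < ρ) (b : ℝ) {G : Eu n → ℝ} (hG : GD ρ G) (x : Eu n) :
    Integrable (fun y => (G y * Real.exp (b * inner ℝ x y)) • y) := by
  have hGm := hG.1
  refine (hG.integrable hρ ((EG.expi b x).mul EG.nrm)).mono' (by fun_prop)
    (Eventually.of_forall fun y => ?_)
  rw [norm_smul, Real.norm_eq_abs, abs_mul, Real.abs_exp, abs_of_pos (hG.2.1 y), mul_assoc]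

lemma bar_inner {n : ℕ} {ρ : ℝ} (hρ : 0 < ρ) (b : ℝ) {G : Eu n → ℝ} (hG : GD ρ G) (x v : Eu n) :
    ∫ y, (G y * Real.exp (b * inner ℝ x y)) * inner ℝ v y = hat b G x * inner ℝ v (bar b G x) := by
  unfold bar
  rw [inner_smul_right, ← mul_assoc, mul_inv_cancel₀ (hat_pos hρ b hG x).ne', one_mul,
    ← integral_inner (bar_int hρ b hG x)]
  congr 1; ext y; rw [inner_smul_right]

lemma hat_sub {n : ℕ} {ρ : ℝ} (hρ : 0 < ρ) (b : ℝ) {G : Eu n → ℝ} (hG : GD ρ G) (x v : Eu n) :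
    hat b G x * Real.exp (b * inner ℝ v (bar b G x)) ≤ hat b G (x + v) := by
  have key : ∀ y, G y * Real.exp (b * inner ℝ (x + v) y)
      = (G y * Real.exp (b * inner ℝ x y)) * Real.exp (b * inner ℝ v y) := by
    intro y; rw [mul_assoc, ← Real.exp_add, inner_add_left, mul_add]
  have i1 : Integrable fun y => G y * Real.exp (b * inner ℝ x y) * (b * inner ℝ v y) := by
    have := hG.integrable hρ ((EG.expi b x).mul ((EG.const b).mul (EG.inn v)))
    simpa only [mul_assoc] using this
  have := jensen_exp volume (fun y => G y * Real.exp (b * inner ℝ x y)) (fun y => b * inner ℝ v y)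
    (fun y => (mul_pos (hG.2.1 y) (Real.exp_pos _)).le) (hat_int hρ b hG x) i1
    ((hat_int hρ b hG (x + v)).congr (Eventually.of_forall key)) (hat_pos hρ b hG x)
  have e : (∫ y, G y * Real.exp (b * inner ℝ x y) * (b * inner ℝ v y))
      = b * (hat b G x * inner ℝ v (bar b G x)) := by
    rw [← bar_inner hρ b hG, ← integral_const_mul]; congr 1; ext y; ring
  rw [e] at this
  unfold hat at this ⊢
  simp only [key]
  convert this using 3
  have := (hat_pos hρ b hG x).ne'
  unfold hat at this
  field_simp

lemma hat_lower {n : ℕ} {ρ : ℝ} (hρ : 0 < ρ) (b : ℝ) {G : Eu n → ℝ} (hG : GD ρ G) :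
    ∃ c R : ℝ, 0 < c ∧ 0 ≤ R ∧ ∀ x, c * Real.exp (-(R * ‖x‖)) ≤ hat b G x := by
  refine ⟨hat b G 0, |b| * ‖bar b G 0‖, hat_pos hρ b hG 0, by positivity, fun x => ?_⟩
  have := hat_sub hρ b hG 0 x
  rw [zero_add] at this
  refine le_trans ?_ this
  have h0 := (hat_pos hρ b hG 0).le
  gcongr
  rw [neg_le]
  calc -(b * inner ℝ x (bar b G 0)) ≤ |b * inner ℝ x (bar b G 0)| := neg_le_abs _
    _ = |b| * |inner ℝ x (bar b G 0)| := abs_mul _ _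
    _ ≤ |b| * (‖x‖ * ‖bar b G 0‖) := by gcongr; exact abs_real_inner_le_norm _ _
    _ = _ := by ring

lemma GD.div_hat {n : ℕ} {ρ : ℝ} (hρ : 0 < ρ) (b : ℝ) {G w : Eu n → ℝ} (hw : GD ρ w)
    (hG : GD ρ G) : GD ρ (fun x => w x / hat b G x) := by
  obtain ⟨c, R, hc, hR, h⟩ := hat_lower hρ b hG
  obtain ⟨wm, w0, C, R', hC⟩ := hw
  refine ⟨wm.div (hat_meas b hG), fun x => div_pos (w0 x) (hat_pos hρ b hG x), C / c, R + R',
    fun y => ?_⟩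
  have h1 : w y / hat b G y ≤ w y / (c * Real.exp (-(R * ‖y‖))) := by
    have := (w0 y).le
    have := h y
    gcongr
  refine h1.trans ?_
  rw [div_le_iff₀ (by positivity)]
  refine (hC y).trans (le_of_eq ?_)
  have : Real.exp (-(ρ / 2) * ‖y‖ ^ 2 + R' * ‖y‖) =
    Real.exp (-(ρ / 2) * ‖y‖ ^ 2 + (R + R') * ‖y‖) * Real.exp (-(R * ‖y‖)) := by
    rw [← Real.exp_add]; ring_nf
  rw [this]; field_simp

lemma hat_upper {n : ℕ} {ρ : ℝ} (hρ : 0 < ρ) (b : ℝ) {G : Eu n → ℝ} (hG : GD ρ G) :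
    ∃ C : ℝ, 0 < C ∧ ∀ x, hat b G x ≤ C * Real.exp (b ^ 2 / ρ * ‖x‖ ^ 2) := by
  have hi : Integrable fun y => G y * Real.exp (ρ / 4 * ‖y‖ ^ 2) := by
    obtain ⟨hGm, hG0, C, R, hC⟩ := hG
    have h4 : 0 < ρ / 4 := by linarith
    refine ((gauss_int' (n := n) h4 R).const_mul C).mono' (by fun_prop)
      (Eventually.of_forall fun y => ?_)
    rw [Real.norm_eq_abs, abs_mul, Real.abs_exp, abs_of_pos (hG0 y)]
    calc _ ≤ C * Real.exp (-(ρ / 2) * ‖y‖ ^ 2 + R * ‖y‖) * Real.exp (ρ / 4 * ‖y‖ ^ 2) := by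
          gcongr; exact hC y
      _ = _ := by rw [mul_assoc, ← Real.exp_add]; ring_nf
  refine ⟨∫ y, G y * Real.exp (ρ / 4 * ‖y‖ ^ 2),
    int_pos hi fun y => mul_pos (hG.2.1 y) (Real.exp_pos _), fun x => ?_⟩
  rw [← integral_mul_const]
  apply integral_mono (hat_int hρ b hG x) (hi.mul_const _)
  intro y
  simp only
  rw [mul_assoc, ← Real.exp_add]
  have := (hG.2.1 y).le
  gcongr
  have h1 : b * inner ℝ x y ≤ |b| * (‖x‖ * ‖y‖) := by
    calc b * inner ℝ x y ≤ |b * inner ℝ x y| := le_abs_self _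
      _ = |b| * |inner ℝ x y| := abs_mul _ _
      _ ≤ |b| * (‖x‖ * ‖y‖) := by gcongr; exact abs_real_inner_le_norm x y
  have h2 : ρ / 4 * ‖y‖ ^ 2 + b ^ 2 / ρ * ‖x‖ ^ 2 - |b| * (‖x‖ * ‖y‖)
      = (ρ * ‖y‖ - 2 * (|b| * ‖x‖)) ^ 2 / (4 * ρ) := by
    rw [← sq_abs b]; field_simp; ring
  have h3 : 0 ≤ (ρ * ‖y‖ - 2 * (|b| * ‖x‖)) ^ 2 / (4 * ρ) := by positivity
  linarith

lemma EG.loghat {n : ℕ} {ρ : ℝ} (hρ : 0 < ρ) (b : ℝ) {G : Eu n → ℝ} (hG : GD ρ G) :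
    EG (fun x => Real.log (hat b G x)) := by
  obtain ⟨c, R, hc, hR, h⟩ := hat_lower hρ b hG
  obtain ⟨C, hC, h'⟩ := hat_upper hρ b hG
  refine EG.of_le (hat_meas b hG).log (((EG.const (|Real.log c| + |Real.log C|)).add
    ((EG.const R).mul EG.nrm)).add ((EG.const (b ^ 2 / ρ)).mul (EG.nrm.mul EG.nrm))) fun x => ?_
  have hp := hat_pos hρ b hG x
  have h1 := Real.log_le_log (by positivity) (h x)
  have h2 := Real.log_le_log hp (h' x)
  rw [Real.log_mul hc.ne' (Real.exp_ne_zero _), Real.log_exp] at h1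
  rw [Real.log_mul hC.ne' (Real.exp_ne_zero _), Real.log_exp] at h2
  have n1 : 0 ≤ R * ‖x‖ := by positivity
  have n2 : 0 ≤ b ^ 2 / ρ * (‖x‖ * ‖x‖) := by positivity
  have := neg_abs_le (Real.log c)
  have := abs_nonneg (Real.log c)
  have := abs_nonneg (Real.log C)
  have := le_abs_self (Real.log C)
  rw [abs_le]
  constructor <;> nlinarith

/-- relative midpoint log-concavity -/
def LC {n : ℕ} (κ : ℝ) (G : Eu n → ℝ) : Prop :=
  ∀ u v, (G u * Real.exp (κ / 2 * ‖u‖ ^ 2)) * (G v * Real.exp (κ / 2 * ‖v‖ ^ 2)) ≤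
    (G ((1 / 2 : ℝ) • (u + v)) * Real.exp (κ / 2 * ‖(1 / 2 : ℝ) • (u + v)‖ ^ 2)) ^ 2

/-- relative midpoint log-convexity -/
def LX {n : ℕ} (κ : ℝ) (G : Eu n → ℝ) : Prop :=
  ∀ u v, (G ((1 / 2 : ℝ) • (u + v)) * Real.exp (κ / 2 * ‖(1 / 2 : ℝ) • (u + v)‖ ^ 2)) ^ 2 ≤
    (G u * Real.exp (κ / 2 * ‖u‖ ^ 2)) * (G v * Real.exp (κ / 2 * ‖v‖ ^ 2))

lemma sq_mid {n : ℕ} (p q : Eu n) : 2 * ‖(1 / 2 : ℝ) • (p + q)‖ ^ 2 ≤ ‖p‖ ^ 2 + ‖q‖ ^ 2 := by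
  have := parallelogram_law_with_norm ℝ p q
  rw [norm_smul, mul_pow]
  have h := mul_self_nonneg ‖p - q‖
  norm_num
  nlinarith

lemma kern_id {n : ℕ} (κ c : ℝ) (x y : Eu n) :
    Real.exp (κ * c * inner ℝ x y) * Real.exp (-(κ * c ^ 2) / 2 * ‖x‖ ^ 2)
      = Real.exp (κ / 2 * ‖y‖ ^ 2) * Real.exp (-(κ / 2) * ‖y - c • x‖ ^ 2) := by
  rw [← Real.exp_add, ← Real.exp_add, norm_sub_sq_real, inner_smul_right, norm_smul, mul_pow,
    Real.norm_eq_abs, sq_abs, real_inner_comm]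
  ring_nf

lemma hat_kern {n : ℕ} (κ c : ℝ) (G : Eu n → ℝ) (x : Eu n) :
    hat (κ * c) G x * Real.exp (-(κ * c ^ 2) / 2 * ‖x‖ ^ 2)
      = ∫ y, (G y * Real.exp (κ / 2 * ‖y‖ ^ 2)) * Real.exp (-(κ / 2) * ‖y - c • x‖ ^ 2) := by
  unfold hat
  rw [← integral_mul_const]
  congr 1; ext y
  rw [mul_assoc, kern_id, mul_assoc]

lemma kern_int {n : ℕ} {ρ : ℝ} (hρ : 0 < ρ) (κ c : ℝ) {G : Eu n → ℝ} (hG : GD ρ G) (x : Eu n) :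
    Integrable fun y => (G y * Real.exp (κ / 2 * ‖y‖ ^ 2)) *
      Real.exp (-(κ / 2) * ‖y - c • x‖ ^ 2) := by
  refine ((hat_int hρ (κ * c) hG x).mul_const (Real.exp (-(κ * c ^ 2) / 2 * ‖x‖ ^ 2))).congr
    (Eventually.of_forall fun y => ?_)
  simp only
  rw [mul_assoc, kern_id, mul_assoc]

lemma hat_lc {n : ℕ} {ρ : ℝ} (hρ : 0 < ρ) {κ : ℝ} (hκ : 0 < κ) (c : ℝ) {G : Eu n → ℝ} (hG : GD ρ G)
    (hL : LC κ G) : LC (-(κ * c ^ 2)) (hat (κ * c) G) := by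
  intro u v
  have hGm := hG.1
  simp only [hat_kern]
  set m := (1 / 2 : ℝ) • (u + v) with hm
  set k : Eu n → Eu n → ℝ := fun x y => (G y * Real.exp (κ / 2 * ‖y‖ ^ 2)) *
      Real.exp (-(κ / 2) * ‖y - c • x‖ ^ 2) with hk
  have k0 : ∀ x y, 0 < k x y := fun x y =>
    mul_pos (mul_pos (hG.2.1 y) (Real.exp_pos _)) (Real.exp_pos _)
  have km : ∀ x, Measurable (k x) := fun x => by simp only [hk]; fun_prop
  have ki : ∀ x, Integrable (k x) := kern_int hρ κ c hG
  have H := pl_euclid n (fun y => ENNReal.ofReal (k u y)) (fun y => ENNReal.ofReal (k v y))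
    (fun y => ENNReal.ofReal (k m y)) (km u).ennreal_ofReal (km v).ennreal_ofReal
    (km m).ennreal_ofReal (by
      intro y y'
      rw [← ENNReal.ofReal_mul (k0 _ _).le, ← ENNReal.ofReal_pow (k0 _ _).le]
      apply ENNReal.ofReal_le_ofReal
      simp only [hk]
      have h1 := hL y y'
      set M := (1 / 2 : ℝ) • (y + y') with hM
      have h2 : M - c • m = (1 / 2 : ℝ) • ((y - c • u) + (y' - c • v)) := by
        rw [hM, hm]; module
      have h3 := sq_mid (y - c • u) (y' - c • v)
      rw [← h2] at h3
      have h4 : Real.exp (-(κ / 2) * ‖y - c • u‖ ^ 2) * Real.exp (-(κ / 2) * ‖y' - c • v‖ ^ 2)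
          ≤ Real.exp (-(κ / 2) * ‖M - c • m‖ ^ 2) ^ 2 := by
        rw [← Real.exp_add, ← Real.exp_nat_mul, Real.exp_le_exp]
        push_cast; nlinarith
      calc _ = ((G y * Real.exp (κ / 2 * ‖y‖ ^ 2)) * (G y' * Real.exp (κ / 2 * ‖y'‖ ^ 2))) *
            (Real.exp (-(κ / 2) * ‖y - c • u‖ ^ 2) * Real.exp (-(κ / 2) * ‖y' - c • v‖ ^ 2)) := by
              ring
        _ ≤ (G M * Real.exp (κ / 2 * ‖M‖ ^ 2)) ^ 2 * Real.exp (-(κ / 2) * ‖M - c • m‖ ^ 2) ^ 2 :=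
            mul_le_mul h1 h4 (by positivity) (by positivity)
        _ = _ := by rw [← mul_pow])
  have e : ∀ x, ∫⁻ y, ENNReal.ofReal (k x y) = ENNReal.ofReal (∫ y, k x y) := fun x =>
    (ofReal_integral_eq_lintegral_ofReal (ki x) (Eventually.of_forall fun y => (k0 x y).le)).symm
  have p0 : ∀ x, 0 ≤ ∫ y, k x y := fun x => integral_nonneg fun y => (k0 x y).le
  rw [e, e, e, ← ENNReal.ofReal_mul (p0 _), ← ENNReal.ofReal_pow (p0 _),
    ENNReal.ofReal_le_ofReal_iff (by positivity)] at H
  exact H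

lemma hat_lx {n : ℕ} {ρ : ℝ} (hρ : 0 < ρ) {κ : ℝ} (c : ℝ) {G : Eu n → ℝ} (hG : GD ρ G)
    (hL : LX κ G) : LX (-(κ * c ^ 2)) (hat (κ * c) G) := by
  intro u v
  simp only [hat_kern]
  set m := (1 / 2 : ℝ) • (u + v) with hm
  set g : Eu n → ℝ := fun y => G y * Real.exp (κ / 2 * ‖y‖ ^ 2) with hg
  have g0 : ∀ y, 0 < g y := fun y => mul_pos (hG.2.1 y) (Real.exp_pos _)
  have tr : ∀ x, ∫ y, g y * Real.exp (-(κ / 2) * ‖y - c • x‖ ^ 2)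
      = ∫ z, g (z + c • x) * Real.exp (-(κ / 2) * ‖z‖ ^ 2) := by
    intro x
    rw [← integral_add_right_eq_self _ (c • x)]
    simp
  have ti : ∀ x, Integrable fun z => g (z + c • x) * Real.exp (-(κ / 2) * ‖z‖ ^ 2) := by
    intro x
    have := (kern_int hρ κ c hG x).comp_add_right (c • x)
    simpa using this
  change (∫ y, g y * Real.exp (-(κ / 2) * ‖y - c • m‖ ^ 2)) ^ 2 ≤
    (∫ y, g y * Real.exp (-(κ / 2) * ‖y - c • u‖ ^ 2)) *
    (∫ y, g y * Real.exp (-(κ / 2) * ‖y - c • v‖ ^ 2))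
  rw [tr, tr, tr]
  have hA : 0 < ∫ z, g (z + c • u) * Real.exp (-(κ / 2) * ‖z‖ ^ 2) :=
    int_pos (ti u) fun z => mul_pos (g0 _) (Real.exp_pos _)
  have hB : 0 < ∫ z, g (z + c • v) * Real.exp (-(κ / 2) * ‖z‖ ^ 2) :=
    int_pos (ti v) fun z => mul_pos (g0 _) (Real.exp_pos _)
  have hC : 0 < ∫ z, g (z + c • m) * Real.exp (-(κ / 2) * ‖z‖ ^ 2) :=
    int_pos (ti m) fun z => mul_pos (g0 _) (Real.exp_pos _)
  have key : ∀ t : ℝ, 0 < t → 2 * (∫ z, g (z + c • m) * Real.exp (-(κ / 2) * ‖z‖ ^ 2)) ≤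
      t * (∫ z, g (z + c • u) * Real.exp (-(κ / 2) * ‖z‖ ^ 2)) +
      t⁻¹ * (∫ z, g (z + c • v) * Real.exp (-(κ / 2) * ‖z‖ ^ 2)) := by
    intro t ht
    rw [← integral_const_mul, ← integral_const_mul, ← integral_const_mul,
      ← integral_add ((ti u).const_mul _) ((ti v).const_mul _)]
    apply integral_mono ((ti m).const_mul _) (((ti u).const_mul _).add ((ti v).const_mul _))
    intro z
    have h1 := hL (z + c • u) (z + c • v)
    have e : (1 / 2 : ℝ) • (z + c • u + (z + c • v)) = z + c • m := by rw [hm]; module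
    rw [e] at h1
    change g (z + c • m) ^ 2 ≤ g (z + c • u) * g (z + c • v) at h1
    have h2 : 2 * g (z + c • m) ≤ t * g (z + c • u) + t⁻¹ * g (z + c • v) := by
      have q0 : 0 ≤ t * g (z + c • u) + t⁻¹ * g (z + c • v) :=
        add_nonneg (mul_nonneg ht.le (g0 _).le) (mul_nonneg (inv_nonneg.2 ht.le) (g0 _).le)
      refine le_of_sq_le_sq ?_ q0
      have : t * g (z + c • u) * (t⁻¹ * g (z + c • v)) = g (z + c • u) * g (z + c • v) := by
        field_simp
      nlinarith [sq_nonneg (t * g (z + c • u) - t⁻¹ * g (z + c • v))]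
    have := mul_le_mul_of_nonneg_right h2 (Real.exp_pos (-(κ / 2) * ‖z‖ ^ 2)).le
    simp only [Pi.add_apply]
    nlinarith
  set A := ∫ z, g (z + c • u) * Real.exp (-(κ / 2) * ‖z‖ ^ 2)
  set B := ∫ z, g (z + c • v) * Real.exp (-(κ / 2) * ‖z‖ ^ 2)
  set C := ∫ z, g (z + c • m) * Real.exp (-(κ / 2) * ‖z‖ ^ 2)
  have := key (C / A) (by positivity)
  have e1 : C / A * A = C := by field_simp
  have e2 : (C / A)⁻¹ * B = A * B / C := by field_simp
  rw [e1, e2] at this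
  have h3 : C ≤ A * B / C := by linarith
  rw [le_div_iff₀ hC] at h3
  nlinarith

lemma LC.div {n : ℕ} {κ₁ κ₂ : ℝ} {F G : Eu n → ℝ} (hF : LC κ₁ F) (hG : LX κ₂ G)
    (F0 : ∀ x, 0 < F x) (G0 : ∀ x, 0 < G x) : LC (κ₁ - κ₂) (fun x => F x / G x) := by
  intro u v
  have e : ∀ x, F x / G x * Real.exp ((κ₁ - κ₂) / 2 * ‖x‖ ^ 2) =
      (F x * Real.exp (κ₁ / 2 * ‖x‖ ^ 2)) / (G x * Real.exp (κ₂ / 2 * ‖x‖ ^ 2)) := by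
    intro x
    rw [sub_div, sub_mul, Real.exp_sub]; field_simp
  rw [e, e, e, div_pow, div_mul_div_comm]
  have := G0 u; have := G0 v; have := G0 ((1 / 2 : ℝ) • (u + v))
  exact div_le_div₀ (by positivity) (hF u v) (by positivity) (hG u v)

lemma LX.div {n : ℕ} {κ₁ κ₂ : ℝ} {F G : Eu n → ℝ} (hF : LX κ₁ F) (hG : LC κ₂ G)
    (F0 : ∀ x, 0 < F x) (G0 : ∀ x, 0 < G x) : LX (κ₁ - κ₂) (fun x => F x / G x) := by
  intro u v
  have e : ∀ x, F x / G x * Real.exp ((κ₁ - κ₂) / 2 * ‖x‖ ^ 2) =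
      (F x * Real.exp (κ₁ / 2 * ‖x‖ ^ 2)) / (G x * Real.exp (κ₂ / 2 * ‖x‖ ^ 2)) := by
    intro x
    rw [sub_div, sub_mul, Real.exp_sub]; field_simp
  rw [e, e, e, div_pow, div_mul_div_comm]
  have := G0 u; have := G0 v; have := F0 u; have := F0 v
  exact div_le_div₀ (by positivity) (hF u v) (by positivity) (hG u v)

lemma log_h1 {n : ℕ} {ρ : ℝ} (hρ : 0 < ρ) (b : ℝ) {G : Eu n → ℝ} (hG : GD ρ G) (x v : Eu n) :
    Real.log (hat b G x) + inner ℝ v (b • bar b G x) ≤ Real.log (hat b G (x + v)) := by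
  have h := hat_sub hρ b hG x v
  have p := hat_pos hρ b hG x
  have := Real.log_le_log (by positivity) h
  rwa [Real.log_mul p.ne' (Real.exp_ne_zero _), Real.log_exp, ← inner_smul_right] at this

lemma log_h2 {n : ℕ} {a : ℝ} {H : Eu n → ℝ} (hL : LC (-a) H) (H0 : ∀ x, 0 < H x) (x v : Eu n) :
    (Real.log (H (x + v)) - a / 2 * ‖x + v‖ ^ 2) + (Real.log (H (x - v)) - a / 2 * ‖x - v‖ ^ 2)
      ≤ 2 * (Real.log (H x) - a / 2 * ‖x‖ ^ 2) := by
  have h := hL (x + v) (x - v)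
  have e : (1 / 2 : ℝ) • (x + v + (x - v)) = x := by module
  rw [e] at h
  have p1 := H0 (x + v); have p2 := H0 (x - v); have p3 := H0 x
  have := Real.log_le_log (by positivity) h
  rw [Real.log_mul (by positivity) (by positivity), Real.log_pow, Real.log_mul (by positivity)
    (by positivity), Real.log_mul (by positivity) (by positivity), Real.log_mul (by positivity)
    (by positivity), Real.log_exp, Real.log_exp, Real.log_exp] at this
  push_cast at this
  linarith

lemma bar_lip {n : ℕ} {ρ : ℝ} (hρ : 0 < ρ) {κ c : ℝ} (hκ : 0 < κ) (hc : 0 < c) {G : Eu n → ℝ}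
    (hG : GD ρ G) (hL : LC κ G) (x y : Eu n) :
    ‖bar (κ * c) G x - bar (κ * c) G y‖ ≤ c * ‖x - y‖ := by
  have := abs_lip (fun x => Real.log (hat (κ * c) G x)) (fun x => (κ * c) • bar (κ * c) G x)
    (κ * c ^ 2) (by positivity) (log_h1 hρ _ hG)
    (log_h2 (hat_lc hρ hκ c hG hL) (hat_pos hρ _ hG)) x y
  rw [← smul_sub, norm_smul, Real.norm_eq_abs, abs_of_pos (by positivity)] at this
  have e : κ * c ^ 2 * ‖x - y‖ = κ * c * (c * ‖x - y‖) := by ring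
  rw [e] at this
  exact le_of_mul_le_mul_left this (by positivity)

lemma hat_sup {n : ℕ} {ρ : ℝ} (hρ : 0 < ρ) {κ c : ℝ} (hκ : 0 < κ) {G : Eu n → ℝ}
    (hG : GD ρ G) (hL : LC κ G) (x v : Eu n) :
    hat (κ * c) G (x + v) ≤ hat (κ * c) G x *
      Real.exp (κ * c * inner ℝ v (bar (κ * c) G x) + κ * c ^ 2 / 2 * ‖v‖ ^ 2) := by
  have := abs_sup (fun x => Real.log (hat (κ * c) G x)) (fun x => (κ * c) • bar (κ * c) G x)
    (κ * c ^ 2) (log_h1 hρ _ hG) (log_h2 (hat_lc hρ hκ c hG hL) (hat_pos hρ _ hG)) x v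
  have p := hat_pos hρ (κ * c) hG (x + v)
  have p' := hat_pos hρ (κ * c) hG x
  rw [inner_smul_right] at this
  calc hat (κ * c) G (x + v) = Real.exp (Real.log (hat (κ * c) G (x + v))) := (Real.exp_log p).symm
    _ ≤ Real.exp (Real.log (hat (κ * c) G x) +
      (κ * c * inner ℝ v (bar (κ * c) G x) + κ * c ^ 2 / 2 * ‖v‖ ^ 2)) := by
        rw [Real.exp_le_exp]; linarith
    _ = _ := by rw [Real.exp_add, Real.exp_log p']

lemma cosh_bd (z : ℝ) : 2 + z ^ 2 ≤ Real.exp z + Real.exp (-z) := by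
  have h : ∀ x : ℝ, 0 ≤ x → 2 + x ^ 2 ≤ Real.exp x + Real.exp (-x) := by
    intro x hx
    have h1 := Real.self_le_sinh_iff.2 (show 0 ≤ x / 2 by linarith)
    rw [Real.sinh_eq] at h1
    have e1 : Real.exp x = Real.exp (x / 2) ^ 2 := by rw [← Real.exp_nat_mul]; push_cast; ring_nf
    have e2 : Real.exp (-x) = Real.exp (-(x / 2)) ^ 2 := by
      rw [← Real.exp_nat_mul]; push_cast; ring_nf
    have e3 : Real.exp (x / 2) * Real.exp (-(x / 2)) = 1 := by rw [← Real.exp_add]; simp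
    rw [e1, e2]
    nlinarith
  rcases le_total 0 z with hz | hz
  · exact h z hz
  · have := h (-z) (by linarith)
    rw [neg_neg] at this
    nlinarith

lemma bar_var {n : ℕ} {ρ : ℝ} (hρ : 0 < ρ) {κ c : ℝ} (hκ : 0 < κ) (hc : 0 < c) {G : Eu n → ℝ}
    (hG : GD ρ G) (hL : LC κ G) (x : Eu n) :
    Integrable (fun y => (G y * Real.exp (κ * c * inner ℝ x y)) * ‖y - bar (κ * c) G x‖ ^ 2) ∧
    ∫ y, (G y * Real.exp (κ * c * inner ℝ x y)) * ‖y - bar (κ * c) G x‖ ^ 2 ≤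
      (2 * n * (Real.exp (1 / (2 * κ)) - 1)) * hat (κ * c) G x := by
  set T := bar (κ * c) G x with hT
  set b := κ * c with hb
  have b0 : 0 < b := by positivity
  have hGm := hG.1
  have hi : ∀ v : Eu n, Integrable (fun y => (G y * Real.exp (b * inner ℝ x y)) *
      (inner ℝ v (y - T)) ^ 2) := by
    intro v
    have h1 : EG fun y : Eu n => inner ℝ v (y - T) := by
      have := (EG.inn v).add (EG.const (-(inner ℝ v T)))
      simpa only [inner_sub_right, sub_eq_add_neg, inner_add_right, inner_neg_right] using this
    have := hG.integrable hρ ((EG.expi b x).mul (h1.mul h1))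
    simpa only [mul_assoc, sq] using this
  have hone : ∀ v : Eu n, ∫ y, (G y * Real.exp (b * inner ℝ x y)) * (inner ℝ v (y - T)) ^ 2
      ≤ 2 * (Real.exp (κ * c ^ 2 / 2 * ‖v‖ ^ 2) - 1) / b ^ 2 * hat b G x := by
    intro v
    have key : ∀ v : Eu n, ∀ y, (G y * Real.exp (b * inner ℝ x y)) *
        Real.exp (b * inner ℝ v (y - T)) =
        (G y * Real.exp (b * inner ℝ (x + v) y)) * Real.exp (-(b * inner ℝ v T)) := by
      intro v y
      rw [mul_assoc (G y), mul_assoc (G y), ← Real.exp_add, ← Real.exp_add, inner_add_left,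
        inner_sub_right]
      ring_nf
    have int1 : ∀ v : Eu n, Integrable fun y => (G y * Real.exp (b * inner ℝ x y)) *
        Real.exp (b * inner ℝ v (y - T)) := by
      intro v
      simp only [key]
      exact (hat_int hρ b hG (x + v)).mul_const _
    have bd1 : ∀ v : Eu n, ∫ y, (G y * Real.exp (b * inner ℝ x y)) *
        Real.exp (b * inner ℝ v (y - T)) ≤ hat b G x * Real.exp (κ * c ^ 2 / 2 * ‖v‖ ^ 2) := by
      intro v
      simp only [key]
      rw [integral_mul_const]
      have := hat_sup hρ (c := c) hκ hG hL x v
      calc _ ≤ hat b G x * Real.exp (b * inner ℝ v T + κ * c ^ 2 / 2 * ‖v‖ ^ 2) *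
            Real.exp (-(b * inner ℝ v T)) := by gcongr; exact this
        _ = _ := by rw [mul_assoc, ← Real.exp_add]; ring_nf
    have B1 := bd1 v
    have B2 := bd1 (-v)
    rw [norm_neg] at B2
    have : ∫ y, (2 * (G y * Real.exp (b * inner ℝ x y)) + b ^ 2 *
        ((G y * Real.exp (b * inner ℝ x y)) * (inner ℝ v (y - T)) ^ 2)) ≤
        ∫ y, ((G y * Real.exp (b * inner ℝ x y)) * Real.exp (b * inner ℝ v (y - T)) +
        (G y * Real.exp (b * inner ℝ x y)) * Real.exp (b * inner ℝ (-v) (y - T))) := by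
      apply integral_mono (((hat_int hρ b hG x).const_mul 2).add ((hi v).const_mul _))
        ((int1 v).add (int1 (-v)))
      intro y
      have h1 := cosh_bd (b * inner ℝ v (y - T))
      have h2 : 0 ≤ G y * Real.exp (b * inner ℝ x y) := (mul_pos (hG.2.1 y) (Real.exp_pos _)).le
      have := mul_le_mul_of_nonneg_left h1 h2
      simp only [Pi.add_apply, inner_neg_left, mul_neg]
      nlinarith
    rw [integral_add ((hat_int hρ b hG x).const_mul 2) ((hi v).const_mul _),
      integral_add (int1 v) (int1 (-v)), integral_const_mul, integral_const_mul] at this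
    change 2 * hat b G x + _ ≤ _ at this
    rw [div_mul_eq_mul_div, le_div_iff₀ (by positivity)]
    nlinarith
  have dec : ∀ y, (G y * Real.exp (b * inner ℝ x y)) * ‖y - T‖ ^ 2 = ∑ i : Fin n,
      (G y * Real.exp (b * inner ℝ x y)) *
        (inner ℝ (EuclideanSpace.single i (1 : ℝ)) (y - T)) ^ 2 := by
    intro y
    rw [EuclideanSpace.real_norm_sq_eq, Finset.mul_sum]
    simp [EuclideanSpace.inner_single_left]
  simp only [dec]
  refine ⟨integrable_finsetSum _ fun i _ => hi _, ?_⟩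
  rw [integral_finsetSum _ fun i _ => hi _]
  -- rescale v by b
  have hone' : ∀ i : Fin n, ∫ y, (G y * Real.exp (b * inner ℝ x y)) *
      (inner ℝ (EuclideanSpace.single i (1 : ℝ)) (y - T)) ^ 2 ≤
      2 * (Real.exp (1 / (2 * κ)) - 1) * hat b G x := by
    intro i
    have := hone (b⁻¹ • EuclideanSpace.single i (1 : ℝ))
    simp only [inner_smul_left, norm_smul, mul_pow] at this
    have e1 : κ * c ^ 2 / 2 * (‖b⁻¹‖ ^ 2 * ‖EuclideanSpace.single i (1 : ℝ)‖ ^ 2)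
        = 1 / (2 * κ) := by
      rw [PiLp.norm_single, Real.norm_eq_abs, sq_abs, hb]; simp; field_simp
    rw [e1] at this
    have e2 : ∀ y, (G y * Real.exp (b * inner ℝ x y)) *
      ((starRingEnd ℝ) b⁻¹ ^ 2 * (inner ℝ (EuclideanSpace.single i (1 : ℝ)) (y - T)) ^ 2) =
      (b⁻¹ ^ 2) * ((G y * Real.exp (b * inner ℝ x y)) *
      (inner ℝ (EuclideanSpace.single i (1 : ℝ)) (y - T)) ^ 2) := by
      intro y; simp only [conj_trivial]; ring
    simp only [e2] at this
    rw [integral_const_mul, inv_pow, div_mul_eq_mul_div, inv_mul_eq_div,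
      div_le_div_iff_of_pos_right (by positivity)] at this
    exact this
  calc _ ≤ ∑ i : Fin n, 2 * (Real.exp (1 / (2 * κ)) - 1) * hat b G x :=
        Finset.sum_le_sum fun i _ => hone' i
    _ = _ := by simp; ring

lemma r_bd (r η : ℝ) (hr : 0 < r) (hη : 0 < η) :
    |r - 1| ≤ (r - 1 - Real.log r) / (2 * η) + η * (r + 1) := by
  obtain ⟨t, ht, rfl⟩ : ∃ t : ℝ, 0 < t ∧ r = t ^ 2 :=
    ⟨Real.sqrt r, Real.sqrt_pos.2 hr, (Real.sq_sqrt hr.le).symm⟩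
  have h1 := Real.log_le_sub_one_of_pos ht
  rw [Real.log_pow]
  push_cast
  have h2 : (t - 1) ^ 2 ≤ t ^ 2 - 1 - 2 * Real.log t := by nlinarith
  have h3 : (t - 1) ^ 2 / (2 * η) ≤ (t ^ 2 - 1 - 2 * Real.log t) / (2 * η) := by gcongr
  have h4 : ∀ s : ℝ, s ^ 2 = (t - 1) ^ 2 → s * (t + 1) ≤ (t - 1) ^ 2 / (2 * η) + η * (t ^ 2 + 1) := by
    intro s hs
    have e : (t - 1) ^ 2 / (2 * η) + η * (t + 1) ^ 2 / 2 - s * (t + 1) =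
        (s - η * (t + 1)) ^ 2 / (2 * η) := by
      rw [← hs]; field_simp; ring
    have : 0 ≤ (s - η * (t + 1)) ^ 2 / (2 * η) := by positivity
    nlinarith [mul_nonneg hη.le (sq_nonneg (t - 1))]
  rw [abs_le]
  constructor
  · have := h4 (-(t - 1)) (by ring)
    nlinarith
  · have := h4 (t - 1) rfl
    nlinarith

lemma pair_int {n : ℕ} {ρ : ℝ} (hρ : 0 < ρ) (b : ℝ) {F G : Eu n → ℝ} (hF : GD ρ F) (hG : GD ρ G)
    (hi : Integrable fun x => F x * hat b G x) :
    Integrable (fun p : Eu n × Eu n => F p.1 * (G p.2 * Real.exp (b * inner ℝ p.1 p.2)))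
      (volume.prod volume) := by
  have hFm := hF.1
  have hGm := hG.1
  rw [integrable_prod_iff (by fun_prop)]
  constructor
  · exact Eventually.of_forall fun x => (hat_int hρ b hG x).const_mul (F x)
  · refine hi.congr (Eventually.of_forall fun x => ?_)
    simp only [hat]
    rw [← integral_const_mul]
    congr 1; ext y
    rw [Real.norm_eq_abs, abs_of_pos]
    exact mul_pos (hF.2.1 x) (mul_pos (hG.2.1 y) (Real.exp_pos _))

lemma pair_swap {n : ℕ} {ρ : ℝ} (hρ : 0 < ρ) (b : ℝ) {F G : Eu n → ℝ} (hF : GD ρ F) (hG : GD ρ G)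
    (hi : Integrable fun x => F x * hat b G x) :
    Integrable (fun x => G x * hat b F x) := by
  have := (pair_int hρ b hF hG hi).swap.integral_prod_left
  refine this.congr (Eventually.of_forall fun y => ?_)
  simp only [Function.comp, Prod.swap, hat]
  rw [← integral_const_mul]
  congr 1; ext x
  rw [real_inner_comm]; ring

lemma pair_eq {n : ℕ} {ρ : ℝ} (hρ : 0 < ρ) (b : ℝ) {F G φ : Eu n → ℝ} (hF : GD ρ F) (hG : GD ρ G)
    (hi : Integrable fun x => F x * hat b G x) (hφ : Measurable φ) (h1 : ∀ x, |φ x| ≤ 1) :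
    Integrable (fun x => F x * ∫ y, (G y * Real.exp (b * inner ℝ x y)) * φ y) ∧
    ∫ x, F x * ∫ y, (G y * Real.exp (b * inner ℝ x y)) * φ y
      = ∫ y, (G y * hat b F y) * φ y := by
  have h := (pair_int hρ b hF hG hi).mul_bdd (c := 1) (g := fun p : Eu n × Eu n => φ p.2)
    (hφ.comp measurable_snd).aestronglyMeasurable (Eventually.of_forall fun p => h1 p.2)
  constructor
  · refine h.integral_prod_left.congr (Eventually.of_forall fun x => ?_)
    simp only
    rw [← integral_const_mul]
    congr 1; ext y; ring
  · calc _ = ∫ x, ∫ y, F x * (G y * Real.exp (b * inner ℝ x y)) * φ y := by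
          congr 1; ext x; rw [← integral_const_mul]; congr 1; ext y; ring
      _ = ∫ y, ∫ x, F x * (G y * Real.exp (b * inner ℝ x y)) * φ y :=
          integral_integral_swap h
      _ = _ := by
          congr 1; ext y
          simp only [hat]
          rw [← integral_const_mul, ← integral_mul_const]
          congr 1; ext x; rw [real_inner_comm]; ring

lemma GD.int {n : ℕ} {ρ : ℝ} (hρ : 0 < ρ) {G : Eu n → ℝ} (hG : GD ρ G) : Integrable G := by
  simpa using hG.integrable hρ (EG.const 1)

/-- Sinkhorn iterates -/
noncomputable def sG {n : ℕ} (b : ℝ) (N w G₀ : Eu n → ℝ) : ℕ → Eu n → ℝ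
  | 0 => G₀
  | k + 1 => fun y => w y / hat b (fun x => N x / hat b (sG b N w G₀ k) x) y

noncomputable def sF {n : ℕ} (b : ℝ) (N w G₀ : Eu n → ℝ) (k : ℕ) : Eu n → ℝ :=
  fun x => N x / hat b (sG b N w G₀ k) x

lemma sink_props {n : ℕ} {ρ : ℝ} (hρ : 0 < ρ) {κ c : ℝ} (hκ : 0 < κ) (hκc : ρ + κ * c ^ 2 = κ)
    {N w G₀ : Eu n → ℝ} (hN : GD ρ N) (hw : GD ρ w) (hG : GD ρ G₀) (lN : LX ρ N) (lw : LC ρ w)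
    (lG : LC κ G₀) (k : ℕ) :
    GD ρ (sG (κ * c) N w G₀ k) ∧ LC κ (sG (κ * c) N w G₀ k) ∧ GD ρ (sF (κ * c) N w G₀ k) := by
  have step : ∀ G, GD ρ G → LC κ G → GD ρ (fun x => N x / hat (κ * c) G x) ∧
      LX κ (fun x => N x / hat (κ * c) G x) := by
    intro G h1 h2
    refine ⟨hN.div_hat hρ _ h1, ?_⟩
    have := lN.div (hat_lc hρ hκ c h1 h2) hN.2.1 (hat_pos hρ _ h1)
    rwa [sub_neg_eq_add, hκc] at this
  have main : GD ρ (sG (κ * c) N w G₀ k) ∧ LC κ (sG (κ * c) N w G₀ k) := by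
    induction k with
    | zero => exact ⟨hG, lG⟩
    | succ k ih =>
      obtain ⟨h1, h2⟩ := step _ ih.1 ih.2
      refine ⟨hw.div_hat hρ _ h1, ?_⟩
      have := lw.div (hat_lx hρ c h1 h2) hw.2.1 (hat_pos hρ _ h1)
      rwa [sub_neg_eq_add, hκc] at this
  exact ⟨main.1, main.2, (step _ main.1 main.2).1⟩

lemma sink_conv {n : ℕ} {ρ : ℝ} (hρ : 0 < ρ) {b : ℝ}
    {N w G₀ : Eu n → ℝ} (hN : GD ρ N) (hw : GD ρ w) (iN : ∫ x, N x = 1) (iw : ∫ x, w x = 1)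
    (hG : ∀ k, GD ρ (sG b N w G₀ k)) (hF : ∀ k, GD ρ (sF b N w G₀ k)) (ε : ℝ) (hε : 0 < ε) :
    ∃ k, (∫ x, N x * Real.log (hat b (sG b N w G₀ k) x)) -
      ∫ x, N x * Real.log (hat b (sG b N w G₀ (k + 1)) x) ≤ ε := by
  set G := sG b N w G₀ with hGd
  set F := sF b N w G₀ with hFd
  have e1 : ∀ k x, F k x * hat b (G k) x = N x := fun k x => by
    simp only [hFd, sF]; exact div_mul_cancel₀ _ (hat_pos hρ b (hG k) x).ne'
  have e2 : ∀ k x, G (k + 1) x * hat b (F k) x = w x := fun k x => by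
    have : G (k + 1) x = w x / hat b (F k) x := rfl
    rw [this]; exact div_mul_cancel₀ _ (hat_pos hρ b (hF k) x).ne'
  set I : ℕ → ℝ := fun k => ∫ x, N x * Real.log (hat b (G k) x) with hI
  set J : ℕ → ℝ := fun k => ∫ x, w x * Real.log (hat b (F k) x) with hJ
  have pi1 : ∀ k, Integrable fun x => F k x * hat b (G k) x := fun k => by
    simp only [e1]; exact hN.int hρ
  have Jstep : ∀ k, J (k + 1) ≤ J k := by
    intro k
    have i1 := pair_swap hρ b (hF (k + 1)) (hG (k + 1)) (pi1 (k + 1))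
    have h1 := (pair_eq hρ b (hF (k + 1)) (hG (k + 1)) (pi1 (k + 1)) (φ := fun _ => 1)
      measurable_const (by simp)).2
    simp only [mul_one] at h1
    have h2 : ∫ y, G (k + 1) y * hat b (F (k + 1)) y = 1 := by
      rw [← h1]
      change ∫ x, F (k + 1) x * hat b (G (k + 1)) x = 1
      simp only [e1]; exact iN
    have l1 := hw.integrable hρ (EG.loghat hρ b (hF (k + 1)))
    have l0 := hw.integrable hρ (EG.loghat hρ b (hF k))
    have h3 : J (k + 1) - J k ≤ ∫ y, (G (k + 1) y * hat b (F (k + 1)) y - w y) := by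
      simp only [hJ]
      rw [← integral_sub l1 l0]
      apply integral_mono (l1.sub l0) (i1.sub (hw.int hρ))
      intro y
      simp only [Pi.sub_apply]
      have p1 := hat_pos hρ b (hF (k + 1)) y
      have p0 := hat_pos hρ b (hF k) y
      have h4 := Real.log_le_sub_one_of_pos (div_pos p1 p0)
      rw [Real.log_div p1.ne' p0.ne'] at h4
      have h5 := mul_le_mul_of_nonneg_left h4 (hw.2.1 y).le
      have h6 : w y * (hat b (F (k + 1)) y / hat b (F k) y) = G (k + 1) y * hat b (F (k + 1)) y := by
        rw [← e2 k]; field_simp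
      linarith
    rw [integral_sub i1 (hw.int hρ), h2, iw] at h3
    linarith
  have Jle : ∀ k, J k ≤ J 0 := by
    intro k
    induction k with
    | zero => exact le_rfl
    | succ k ih => exact (Jstep k).trans ih
  set m := bar 0 w 0 with hm
  have Mx : ∀ x, ∫ y, w y * (b * inner ℝ x y) = b * inner ℝ x m := by
    intro x
    have := bar_inner hρ 0 hw 0 x
    simp only [zero_mul, Real.exp_zero, mul_one] at this
    have h0 : hat 0 w 0 = 1 := by simp [hat, iw]
    rw [h0, one_mul] at this
    rw [← this, ← integral_const_mul]
    congr 1; ext y; ring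
  have low : ∀ k x, b * inner ℝ x m - J 0 ≤ Real.log (hat b (G (k + 1)) x) := by
    intro k x
    have eg := EG.loghat hρ b (hF k)
    have i1 : Integrable fun y => w y * (b * inner ℝ x y) :=
      hw.integrable hρ ((EG.const b).mul (EG.inn x))
    have i2 := hw.integrable hρ eg
    have key : ∀ y, w y * Real.exp (b * inner ℝ x y - Real.log (hat b (F k) y)) =
        G (k + 1) y * Real.exp (b * inner ℝ x y) := by
      intro y
      have p0 := hat_pos hρ b (hF k) y
      rw [Real.exp_sub, Real.exp_log p0, ← e2 k]; field_simp
    have := jensen_exp volume w (fun y => b * inner ℝ x y - Real.log (hat b (F k) y))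
      (fun y => (hw.2.1 y).le) (hw.int hρ) (by simp only [mul_sub]; exact i1.sub i2)
      (by simp only [key]; exact hat_int hρ b (hG (k + 1)) x) (by rw [iw]; exact one_pos)
    simp only [key, iw, div_one, one_mul, mul_sub] at this
    rw [integral_sub i1 i2, Mx] at this
    rw [Real.le_log_iff_exp_le (hat_pos hρ b (hG (k + 1)) x)]
    refine le_trans ?_ this
    rw [Real.exp_le_exp]
    exact sub_le_sub_left (Jle k) _
  have iA : Integrable fun x => N x * (b * inner ℝ x m - J 0) := by
    refine hN.integrable hρ ?_
    have := ((EG.const b).mul (EG.inn m)).add (EG.const (-(J 0)))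
    simpa only [real_inner_comm m, ← sub_eq_add_neg] using this
  set A := ∫ x, N x * (b * inner ℝ x m - J 0)
  have Ilow : ∀ k, A ≤ I (k + 1) := by
    intro k
    apply integral_mono iA (hN.integrable hρ (EG.loghat hρ b (hG (k + 1))))
    intro x
    exact mul_le_mul_of_nonneg_left (low k x) (hN.2.1 x).le
  by_contra! hcon
  have hdec : ∀ k : ℕ, I (k + 1) ≤ I 0 - (k + 1) * ε := by
    intro k
    induction k with
    | zero => have := hcon 0; simp only [hI]; push_cast; simp only [zero_add] at this ⊢; linarith
    | succ k ih =>
      have := hcon (k + 1)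
      simp only [hI] at ih ⊢
      push_cast; linarith
  obtain ⟨k, hk⟩ := exists_nat_gt ((I 0 - A) / ε)
  rw [div_lt_iff₀ hε] at hk
  have := hdec k
  have := Ilow k
  nlinarith

lemma sink_step {n : ℕ} {ρ : ℝ} (hρ : 0 < ρ) {κ c : ℝ} (hκ : 0 < κ) (hc : 0 < c)
    {N w G₁ F : Eu n → ℝ} (hN : GD ρ N) (hw : GD ρ w) (iN : ∫ x, N x = 1) (iw : ∫ x, w x = 1)
    (hG₁ : GD ρ G₁) (hF : GD ρ F) {H : Eu n → ℝ} (hH0 : ∀ x, 0 < H x) (hH : EG fun x => Real.log (H x))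
    (lG : LC κ G₁) (e1 : ∀ x, F x * H x = N x) (e2 : ∀ x, G₁ x * hat (κ * c) F x = w x)
    {δ η s : ℝ} (hδ : (∫ x, N x * Real.log (H x)) - ∫ x, N x * Real.log (hat (κ * c) G₁ x) ≤ δ)
    (hη : 0 < η) (hs : 0 < s) {φ : Eu n → ℝ} (hφ1 : ∀ x, |φ x| ≤ 1) (hφ : LipschitzWith 1 φ) :
    |(∫ x, w x * φ x) - ∫ x, N x * φ (bar (κ * c) G₁ x)| ≤
      ((2 * n * (Real.exp (1 / (2 * κ)) - 1)) / s + s) / 2 + (δ / (2 * η) + 2 * η) := by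
  set b := κ * c with hb
  set T := bar b G₁ with hT
  set η₀ := 2 * n * (Real.exp (1 / (2 * κ)) - 1) with hη₀
  have Tc : Continuous T := by
    have : LipschitzWith (⟨c, hc.le⟩ : NNReal) T := LipschitzWith.of_dist_le_mul fun x y => by
      rw [dist_eq_norm, dist_eq_norm]; exact bar_lip hρ hκ hc hG₁ lG x y
    exact this.continuous
  have φc := hφ.continuous
  have φT : Continuous fun x => φ (T x) := φc.comp Tc
  have wi : Integrable fun x => G₁ x * hat b F x := by simp only [e2]; exact hw.int hρ
  have Hi := pair_swap hρ b hG₁ hF wi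
  have I1 : ∫ x, F x * hat b G₁ x = 1 := by
    have h1 := (pair_eq hρ b hF hG₁ Hi (φ := fun _ => 1) measurable_const (by simp)).2
    simp only [mul_one] at h1
    change ∫ x, F x * hat b G₁ x = _ at h1
    rw [h1]; simp only [e2]; exact iw
  obtain ⟨P1, P2⟩ := pair_eq hρ b hF hG₁ Hi φc.measurable hφ1
  simp only [e2] at P2
  -- inner estimate
  have inner1 : ∀ x, |(∫ y, (G₁ y * Real.exp (b * inner ℝ x y)) * φ y) - hat b G₁ x * φ (T x)| ≤
      (η₀ / s + s) / 2 * hat b G₁ x := by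
    intro x
    obtain ⟨v1, v2⟩ := bar_var hρ hκ hc hG₁ lG x
    have g0 := hat_int hρ b hG₁ x
    have g1 : Integrable fun y => (G₁ y * Real.exp (b * inner ℝ x y)) * φ y :=
      g0.mul_bdd (c := 1) φc.aestronglyMeasurable (Eventually.of_forall hφ1)
    have ee : (∫ y, (G₁ y * Real.exp (b * inner ℝ x y)) * φ y) - hat b G₁ x * φ (T x) =
        ∫ y, ((G₁ y * Real.exp (b * inner ℝ x y)) * φ y -
          (G₁ y * Real.exp (b * inner ℝ x y)) * φ (T x)) := by
      rw [integral_sub g1 (g0.mul_const _), integral_mul_const]; rfl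
    rw [ee]
    refine (abs_integral_le_integral_abs).trans ?_
    have bd : ∫ y, |(G₁ y * Real.exp (b * inner ℝ x y)) * φ y -
          (G₁ y * Real.exp (b * inner ℝ x y)) * φ (T x)| ≤
        ∫ y, (1 / (2 * s) * ((G₁ y * Real.exp (b * inner ℝ x y)) * ‖y - T x‖ ^ 2) +
          s / 2 * (G₁ y * Real.exp (b * inner ℝ x y))) := by
      apply integral_mono (g1.sub (g0.mul_const _)).abs
        ((v1.const_mul _).add (g0.const_mul _))
      intro y
      simp only [Pi.add_apply, Pi.sub_apply]
      have p : 0 ≤ G₁ y * Real.exp (b * inner ℝ x y) :=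
        (mul_pos (hG₁.2.1 y) (Real.exp_pos _)).le
      rw [← mul_sub, abs_mul, abs_of_nonneg p]
      have h1 : |φ y - φ (T x)| ≤ ‖y - T x‖ := by
        have := hφ.dist_le_mul y (T x)
        rwa [Real.dist_eq, NNReal.coe_one, one_mul, dist_eq_norm] at this
      have h2 : ‖y - T x‖ ≤ 1 / (2 * s) * ‖y - T x‖ ^ 2 + s / 2 := by
        have : 1 / (2 * s) * ‖y - T x‖ ^ 2 + s / 2 - ‖y - T x‖ = (‖y - T x‖ - s) ^ 2 / (2 * s) := by
          field_simp; ring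
        have : 0 ≤ (‖y - T x‖ - s) ^ 2 / (2 * s) := by positivity
        linarith
      have := mul_le_mul_of_nonneg_left (h1.trans h2) p
      nlinarith
    refine bd.trans ?_
    rw [integral_add (v1.const_mul _) (g0.const_mul _), integral_const_mul, integral_const_mul]
    change _ + s / 2 * hat b G₁ x ≤ _
    have := mul_le_mul_of_nonneg_left v2 (show 0 ≤ 1 / (2 * s) by positivity)
    calc _ ≤ 1 / (2 * s) * (η₀ * hat b G₁ x) + s / 2 * hat b G₁ x := by gcongr
      _ = _ := by field_simp
  have Q1 : Integrable fun x => F x * (hat b G₁ x * φ (T x)) := by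
    have := Hi.mul_bdd (c := 1) φT.aestronglyMeasurable (Eventually.of_forall fun x => hφ1 (T x))
    simpa only [mul_assoc] using this
  have est1 : |(∫ x, w x * φ x) - ∫ x, F x * (hat b G₁ x * φ (T x))| ≤ (η₀ / s + s) / 2 := by
    rw [← P2, ← integral_sub P1 Q1]
    refine (abs_integral_le_integral_abs).trans ?_
    calc _ ≤ ∫ x, (η₀ / s + s) / 2 * (F x * hat b G₁ x) := by
          apply integral_mono (P1.sub Q1).abs (Hi.const_mul _)
          intro x
          simp only [Pi.sub_apply]
          rw [← mul_sub, abs_mul, abs_of_pos (hF.2.1 x)]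
          have := mul_le_mul_of_nonneg_left (inner1 x) (hF.2.1 x).le
          linarith
      _ = _ := by rw [integral_const_mul, I1, mul_one]
  have nT : Integrable fun x => N x * φ (T x) :=
    (hN.int hρ).mul_bdd (c := 1) φT.aestronglyMeasurable (Eventually.of_forall fun x => hφ1 (T x))
  have est2 : |(∫ x, F x * (hat b G₁ x * φ (T x))) - ∫ x, N x * φ (T x)| ≤ δ / (2 * η) + 2 * η := by
    rw [← integral_sub Q1 nT]
    refine (abs_integral_le_integral_abs).trans ?_
    have l1 := hN.integrable hρ hH
    have l0 := hN.integrable hρ (EG.loghat hρ b hG₁)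
    have Ni := hN.int hρ
    calc _ ≤ ∫ x, (1 / (2 * η) * (F x * hat b G₁ x - N x + (N x * Real.log (H x) -
          N x * Real.log (hat b G₁ x))) + η * (F x * hat b G₁ x + N x)) := by
          apply integral_mono (Q1.sub nT).abs ((((Hi.sub Ni).add (l1.sub l0)).const_mul _).add
            ((Hi.add Ni).const_mul _))
          intro x
          have p1 := hat_pos hρ b hG₁ x
          have p0 := hH0 x
          have h1 := r_bd _ η (div_pos p1 p0) hη
          have hNx := hN.2.1 x
          simp only [Pi.add_apply, Pi.sub_apply]
          have h2 : N x * (hat b G₁ x / H x) = F x * hat b G₁ x := by rw [← e1]; field_simp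
          have h3 : F x * (hat b G₁ x * φ (T x)) - N x * φ (T x) =
              N x * (hat b G₁ x / H x - 1) * φ (T x) := by
            rw [mul_sub, h2]; ring
          rw [h3, abs_mul, abs_mul, abs_of_pos hNx]
          calc _ ≤ N x * |hat b G₁ x / H x - 1| * 1 := by gcongr; exact hφ1 _
            _ ≤ N x * ((hat b G₁ x / H x - 1 - Real.log (hat b G₁ x / H x)) / (2 * η) +
                η * (hat b G₁ x / H x + 1)) * 1 := by gcongr
            _ = 1 / (2 * η) * (N x * (hat b G₁ x / H x) - N x - N x *
                  Real.log (hat b G₁ x / H x)) + η * (N x * (hat b G₁ x / H x) + N x) := by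
                  ring
            _ = _ := by rw [h2, Real.log_div p1.ne' p0.ne']; ring
      _ = 1 / (2 * η) * ((∫ x, N x * Real.log (H x)) - ∫ x, N x * Real.log (hat b G₁ x)) + 2 * η := by
          have a1 : Integrable fun x => F x * hat b G₁ x - N x := Hi.sub Ni
          have a2 : Integrable fun x => N x * Real.log (H x) - N x * Real.log (hat b G₁ x) :=
            l1.sub l0
          have a3 : Integrable fun x => F x * hat b G₁ x - N x + (N x * Real.log (H x) -
            N x * Real.log (hat b G₁ x)) := a1.add a2
          have a4 : Integrable fun x => F x * hat b G₁ x + N x := Hi.add Ni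
          rw [integral_add (a3.const_mul _) (a4.const_mul _),
            integral_const_mul, integral_const_mul, integral_add a1 a2,
            integral_add Hi Ni, integral_sub Hi Ni, integral_sub l1 l0, I1, iN]
          ring
      _ ≤ _ := by
          have := mul_le_mul_of_nonneg_left hδ (show 0 ≤ 1 / (2 * η) by positivity)
          have e : 1 / (2 * η) * δ = δ / (2 * η) := by ring
          linarith
  calc _ = |((∫ x, w x * φ x) - ∫ x, F x * (hat b G₁ x * φ (T x))) +
        ((∫ x, F x * (hat b G₁ x * φ (T x))) - ∫ x, N x * φ (T x))| := by ring_nf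
    _ ≤ _ := (abs_add_le _ _).trans (add_le_add est1 est2)

/-- approximate Caffarelli -/
theorem approx_caff {n : ℕ} {ρ : ℝ} (hρ : 0 < ρ) {N w : Eu n → ℝ} (hN : GD ρ N) (hw : GD ρ w)
    (iN : ∫ x, N x = 1) (iw : ∫ x, w x = 1) (lN : LX ρ N) (lw : LC ρ w) (ε : ℝ) (hε : 0 < ε) :
    ∃ T : Eu n → Eu n, LipschitzWith 1 T ∧ ∀ φ : Eu n → ℝ, (∀ x, |φ x| ≤ 1) → LipschitzWith 1 φ →
      |(∫ x, w x * φ x) - ∫ x, N x * φ (T x)| ≤ ε := by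
  -- choose κ
  have ht : Tendsto (fun κ : ℝ => 2 * (n : ℝ) * (Real.exp (1 / (2 * κ)) - 1)) atTop (𝓝 0) := by
    have h1 : Tendsto (fun κ : ℝ => 1 / (2 * κ)) atTop (𝓝 0) := by
      have := (tendsto_inv_atTop_zero (𝕜 := ℝ)).const_mul (1 / 2)
      simp only [mul_zero] at this
      refine this.congr fun κ => ?_
      rw [one_div, one_div, mul_inv]
    have h2 := (Real.continuous_exp.tendsto 0).comp h1
    have h3 := (h2.sub_const 1).const_mul (2 * (n : ℝ))
    simpa using h3
  obtain ⟨κ, hκ1, hκ2⟩ := ((ht.eventually (gt_mem_nhds (show 0 < ε ^ 2 / 4 by positivity))).and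
    (eventually_gt_atTop ρ)).exists
  have hκ : 0 < κ := hρ.trans hκ2
  set c := Real.sqrt (1 - ρ / κ) with hcd
  have hq : ρ / κ < 1 := by rw [div_lt_one hκ]; exact hκ2
  have hc : 0 < c := Real.sqrt_pos.2 (by linarith)
  have hc2 : c ^ 2 = 1 - ρ / κ := Real.sq_sqrt (by linarith)
  have hc1 : c ≤ 1 := by
    have : 0 < ρ / κ := by positivity
    nlinarith
  have hκc : ρ + κ * c ^ 2 = κ := by rw [hc2]; field_simp; ring
  set G₀ : Eu n → ℝ := fun y => Real.exp (-(κ / 2 * ‖y‖ ^ 2)) with hG₀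
  have hGD : GD ρ G₀ := by
    refine ⟨by fun_prop, fun y => Real.exp_pos _, 1, 0, fun y => ?_⟩
    rw [one_mul, Real.exp_le_exp]
    nlinarith [sq_nonneg ‖y‖]
  have hLC : LC κ G₀ := by
    intro u v
    simp only [hG₀, ← Real.exp_add]
    simp
  have hp := sink_props hρ hκ hκc hN hw hGD lN lw hLC
  obtain ⟨k, hk⟩ := sink_conv hρ (b := κ * c) hN hw iN iw (fun k => (hp k).1) (fun k => (hp k).2.2)
    (ε ^ 2 / 32) (by positivity)
  refine ⟨bar (κ * c) (sG (κ * c) N w G₀ (k + 1)), LipschitzWith.of_dist_le_mul fun x y => ?_,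
    fun φ h1 h2 => ?_⟩
  · rw [dist_eq_norm, dist_eq_norm]
    refine (bar_lip hρ hκ hc (hp (k + 1)).1 (hp (k + 1)).2.1 x y).trans ?_
    simp only [NNReal.coe_one]
    gcongr
  · have := sink_step hρ hκ hc hN hw iN iw (hp (k + 1)).1 (hp k).2.2
      (hat_pos hρ (κ * c) (hp k).1) (EG.loghat hρ (κ * c) (hp k).1) (hp (k + 1)).2.1
      (fun x => by simp only [sF]; exact div_mul_cancel₀ _ (hat_pos hρ _ (hp k).1 x).ne')
      (fun x => div_mul_cancel₀ _ (hat_pos hρ (κ * c) (hp k).2.2 x).ne')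
      hk (show 0 < ε / 8 by positivity) (show 0 < ε / 2 by positivity) h1 h2
    refine this.trans ?_
    have e : (2 * (n : ℝ) * (Real.exp (1 / (2 * κ)) - 1)) / (ε / 2) ≤ (ε ^ 2 / 4) / (ε / 2) := by
      gcongr
    have e2 : (ε ^ 2 / 4) / (ε / 2) = ε / 2 := by field_simp; norm_num
    have e3 : ε ^ 2 / 32 / (2 * (ε / 8)) = ε / 8 := by field_simp; norm_num
    rw [e3]
    linarith

lemma ball_large {n : ℕ} (μ : Measure (Eu n)) [IsProbabilityMeasure μ] :
    ∀ᶠ R : ℕ in atTop, 3 / 4 < μ.real (Metric.closedBall 0 R) := by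
  have h := tendsto_measure_iUnion_atTop (μ := μ) (s := fun R : ℕ => Metric.closedBall (0 : Eu n) R)
    (fun a b hab => Metric.closedBall_subset_closedBall (by exact_mod_cast hab))
  have hu : (⋃ R : ℕ, Metric.closedBall (0 : Eu n) R) = Set.univ := Metric.iUnion_closedBall_nat 0
  rw [hu, measure_univ] at h
  have h2 := (ENNReal.tendsto_toReal ENNReal.one_ne_top).comp h
  have := h2.eventually (lt_mem_nhds (show (3 / 4 : ℝ) < (1 : ℝ≥0∞).toReal by norm_num))
  exact this

theorem limit_map {n : ℕ} (μ γ : Measure (Eu n)) [IsProbabilityMeasure μ] [IsProbabilityMeasure γ]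
    (H : ∀ ε : ℝ, 0 < ε → ∃ T : Eu n → Eu n, LipschitzWith 1 T ∧ ∀ φ : Eu n → ℝ,
      (∀ x, |φ x| ≤ 1) → LipschitzWith 1 φ → |(∫ x, φ x ∂μ) - ∫ x, φ (T x) ∂γ| ≤ ε) :
    ∃ T : Eu n → Eu n, LipschitzWith 1 T ∧ γ.map T = μ := by
  choose T hT hφ using fun m : ℕ => H (1 / (m + 3)) (by positivity)
  obtain ⟨R, hR1, hR2⟩ := ((ball_large μ).and (ball_large γ)).exists
  have lip : ∀ m x y, ‖T m x - T m y‖ ≤ ‖x - y‖ := by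
    intro m x y
    have := (hT m).dist_le_mul x y
    rwa [NNReal.coe_one, one_mul, dist_eq_norm, dist_eq_norm] at this
  set φ : Eu n → ℝ := fun y => max 0 (min 1 (‖y‖ - R)) with hφd
  have φ0 : ∀ y, 0 ≤ φ y := fun y => le_max_left _ _
  have φ1 : ∀ y, φ y ≤ 1 := fun y => max_le zero_le_one (min_le_left _ _)
  have φa : ∀ y, |φ y| ≤ 1 := fun y => by rw [abs_of_nonneg (φ0 y)]; exact φ1 y
  have φl : LipschitzWith 1 φ := by
    have h1 : LipschitzWith 1 fun y : Eu n => ‖y‖ - R :=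
      LipschitzWith.of_dist_le_mul fun x y => by
        rw [Real.dist_eq, NNReal.coe_one, one_mul, dist_eq_norm]
        simpa using abs_norm_sub_norm_le x y
    exact (h1.const_min 1).const_max 0
  have bd0 : ∀ m, ‖T m 0‖ ≤ 2 * R + 1 := by
    intro m
    by_contra! hcon
    have h1 := hφ m φ φa φl
    have im : Integrable φ μ := Integrable.of_bound φl.continuous.aestronglyMeasurable 1
      (Eventually.of_forall φa)
    have ig : Integrable (fun x => φ (T m x)) γ :=
      Integrable.of_bound (φl.continuous.comp (hT m).continuous).aestronglyMeasurable 1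
      (Eventually.of_forall fun x => φa _)
    have hm : MeasurableSet (Metric.closedBall (0 : Eu n) R) := Metric.isClosed_closedBall.measurableSet
    have h2 : ∫ x, φ x ∂μ ≤ 1 / 4 := by
      calc ∫ x, φ x ∂μ ≤ ∫ x, (Metric.closedBall (0 : Eu n) R)ᶜ.indicator (fun _ => (1 : ℝ)) x ∂μ := by
            apply integral_mono im ((integrable_const _).indicator hm.compl)
            intro x
            by_cases hx : x ∈ Metric.closedBall (0 : Eu n) R
            · have : ‖x‖ ≤ R := by simpa using hx
              simp only [Set.indicator_of_notMem (Set.notMem_compl_iff.2 hx), hφd]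
              exact max_le le_rfl ((min_le_right _ _).trans (by linarith))
            · rw [Set.indicator_of_mem (show x ∈ (Metric.closedBall (0 : Eu n) R)ᶜ from hx)]
              exact φ1 x
        _ = μ.real (Metric.closedBall (0 : Eu n) R)ᶜ := by
            rw [integral_indicator_const _ hm.compl]; simp
        _ ≤ _ := by rw [probReal_compl_eq_one_sub hm]; linarith
    have h3 : 3 / 4 < ∫ x, φ (T m x) ∂γ := by
      calc 3 / 4 < γ.real (Metric.closedBall (0 : Eu n) R) := hR2
        _ = ∫ x, (Metric.closedBall (0 : Eu n) R).indicator (fun _ => (1 : ℝ)) x ∂γ := by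
            rw [integral_indicator_const _ hm]; simp
        _ ≤ _ := by
            apply integral_mono ((integrable_const _).indicator hm) ig
            intro x
            by_cases hx : x ∈ Metric.closedBall (0 : Eu n) R
            · have h4 : ‖x‖ ≤ R := by simpa using hx
              rw [Set.indicator_of_mem hx]
              have h5 := lip m 0 x
              rw [zero_sub, norm_neg] at h5
              have h6 := norm_sub_norm_le (T m 0) (T m x)
              exact le_max_of_le_right (le_min le_rfl (by linarith))
            · rw [Set.indicator_of_notMem hx]; exact φ0 _
    rw [abs_le] at h1
    have h4 : (1 : ℝ) / (m + 3) ≤ 1 / 3 := by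
      apply one_div_le_one_div_of_le <;> [norm_num; (have : (0 : ℝ) ≤ m := m.cast_nonneg; linarith)]
    linarith
  have bd : ∀ m x, ‖T m x‖ ≤ ‖x‖ + (2 * R + 1) := by
    intro m x
    have h1 := lip m x 0
    rw [sub_zero] at h1
    have h2 := norm_sub_norm_le (T m x) (T m 0)
    have := bd0 m
    linarith
  set D : ℕ → Eu n := TopologicalSpace.denseSeq (Eu n) with hD
  have hK : IsCompact (Set.pi Set.univ fun i : ℕ =>
      Metric.closedBall (0 : Eu n) (‖D i‖ + (2 * R + 1))) :=
    isCompact_univ_pi fun i => isCompact_closedBall _ _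
  obtain ⟨a, -, σ, hσ, hlim⟩ := hK.tendsto_subseq (x := fun m i => T m (D i))
    (fun m i _ => by simpa using bd m (D i))
  rw [tendsto_pi_nhds] at hlim
  have cau : ∀ x, ∃ l, Tendsto (fun m => T (σ m) x) atTop (𝓝 l) := by
    intro x
    apply cauchySeq_tendsto_of_complete
    rw [Metric.cauchySeq_iff]
    intro ε hε
    obtain ⟨i, hi⟩ := (TopologicalSpace.denseRange_denseSeq (Eu n)).exists_dist_lt x
      (show 0 < ε / 4 by positivity)
    obtain ⟨M, hM⟩ := Metric.cauchySeq_iff.1 (hlim i).cauchySeq (ε / 4) (by positivity)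
    refine ⟨M, fun p hp q hq => ?_⟩
    have h1 := hM p hp q hq
    have h2 := lip (σ p) x (D i)
    have h3 := lip (σ q) x (D i)
    rw [← dist_eq_norm, ← dist_eq_norm] at h2 h3
    change dist (T (σ p) (D i)) (T (σ q) (D i)) < _ at h1
    change dist x (D i) < _ at hi
    have h4 := dist_triangle (T (σ p) x) (T (σ p) (D i)) (T (σ q) x)
    have h5 := dist_triangle (T (σ p) (D i)) (T (σ q) (D i)) (T (σ q) x)
    rw [dist_comm (T (σ q) (D i))] at h5
    linarith
  choose S hS using cau
  have Slip : LipschitzWith 1 S := LipschitzWith.of_dist_le_mul fun x y =>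
    le_of_tendsto ((hS x).dist (hS y)) (Eventually.of_forall fun m => (hT (σ m)).dist_le_mul x y)
  refine ⟨S, Slip, ?_⟩
  have main : ∀ ψ : Eu n → ℝ, (∀ x, |ψ x| ≤ 1) → LipschitzWith 1 ψ →
      ∫ x, ψ x ∂μ = ∫ x, ψ (S x) ∂γ := by
    intro ψ h1 h2
    have t1 : Tendsto (fun m => ∫ x, ψ (T (σ m) x) ∂γ) atTop (𝓝 (∫ x, ψ (S x) ∂γ)) := by
      apply tendsto_integral_of_dominated_convergence (fun _ => 1)
      · exact fun m => (h2.continuous.comp (hT (σ m)).continuous).aestronglyMeasurable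
      · exact integrable_const _
      · exact fun m => Eventually.of_forall fun x => h1 _
      · exact Eventually.of_forall fun x => (h2.continuous.tendsto _).comp (hS x)
    have t2 : Tendsto (fun m => ∫ x, ψ (T (σ m) x) ∂γ) atTop (𝓝 (∫ x, ψ x ∂μ)) := by
      rw [tendsto_iff_dist_tendsto_zero]
      refine squeeze_zero (fun _ => dist_nonneg) (g := fun m : ℕ => 1 / ((σ m : ℝ) + 3)) (fun m => ?_) ?_
      · rw [dist_comm, Real.dist_eq]; exact hφ (σ m) ψ h1 h2
      · have h3 : Tendsto (fun m : ℕ => 1 / ((m : ℝ) + 3)) atTop (𝓝 0) := by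
          have := tendsto_natCast_atTop_atTop (R := ℝ)
          simp only [one_div]
          exact (tendsto_atTop_add_const_right _ 3 this).inv_tendsto_atTop
        exact h3.comp hσ.tendsto_atTop
    exact tendsto_nhds_unique t2 t1
  have Sm : AEMeasurable S γ := Slip.continuous.measurable.aemeasurable
  have pm : IsProbabilityMeasure (γ.map S) := Measure.isProbabilityMeasure_map Sm
  obtain ⟨P, hP⟩ : ∃ P : ProbabilityMeasure (Eu n), (P : Measure (Eu n)) = γ.map S :=
    ⟨⟨_, pm⟩, rfl⟩
  obtain ⟨Q, hQ⟩ : ∃ P : ProbabilityMeasure (Eu n), (P : Measure (Eu n)) = μ :=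
    ⟨⟨μ, inferInstance⟩, rfl⟩
  have hcv : Tendsto (fun _ : ℕ => P) atTop (𝓝 Q) := by
    rw [tendsto_iff_forall_lipschitz_integral_tendsto]
    intro f ⟨C, hC⟩ ⟨L, hL⟩
    have e : ∫ x, f x ∂μ = ∫ x, f x ∂(γ.map S) := by
      rw [integral_map Sm hL.continuous.aestronglyMeasurable]
      -- scale
      set c : ℝ := 1 + |f 0| + |C| + L with hc
      have c0 : 0 < c := by positivity
      have := main (fun x => c⁻¹ * f x) (fun x => by
        rw [abs_mul, abs_of_pos (inv_pos.2 c0), inv_mul_le_iff₀ c0, mul_one]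
        have h1 := hC x 0
        rw [Real.dist_eq] at h1
        have h2 := abs_sub_abs_le_abs_sub (f x) (f 0)
        have h3 := le_abs_self C
        have h4 : (0 : ℝ) ≤ L := L.2
        linarith) (LipschitzWith.of_dist_le_mul fun x y => by
        rw [Real.dist_eq, ← mul_sub, abs_mul, abs_of_pos (inv_pos.2 c0), inv_mul_le_iff₀ c0,
          NNReal.coe_one, one_mul]
        have h1 := hL.dist_le_mul x y
        rw [Real.dist_eq] at h1
        refine h1.trans ?_
        gcongr
        have := abs_nonneg (f 0)
        have := abs_nonneg C
        linarith)
      rw [integral_const_mul, integral_const_mul] at this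
      exact mul_left_cancel₀ (inv_ne_zero c0.ne') this
    rw [hP, hQ, e]
    exact tendsto_const_nhds
  have := tendsto_nhds_unique (tendsto_const_nhds) hcv
  rw [← hP, ← hQ, this]

lemma GD.scale {n : ℕ} {ρ : ℝ} {G : Eu n → ℝ} (hG : GD ρ G) {a : ℝ} (ha : 0 < a) :
    GD ρ (fun x => a * G x) := by
  obtain ⟨h1, h2, C, R, h3⟩ := hG
  refine ⟨h1.const_mul a, fun x => mul_pos ha (h2 x), a * C, R, fun y => ?_⟩
  rw [mul_assoc]
  exact mul_le_mul_of_nonneg_left (h3 y) ha.le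

lemma LC.scale {n : ℕ} {κ : ℝ} {G : Eu n → ℝ} (hG : LC κ G) (a : ℝ) :
    LC κ (fun x => a * G x) := by
  intro u v
  have := mul_le_mul_of_nonneg_left (hG u v) (sq_nonneg a)
  linarith

lemma LX.scale {n : ℕ} {κ : ℝ} {G : Eu n → ℝ} (hG : LX κ G) (a : ℝ) :
    LX κ (fun x => a * G x) := by
  intro u v
  have := mul_le_mul_of_nonneg_left (hG u v) (sq_nonneg a)
  linarith

lemma dens_univ {n : ℕ} {ρ : ℝ} (hρ : 0 < ρ) {h : Eu n → ℝ} (hh : GD ρ h) :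
    (volume.withDensity fun x => ENNReal.ofReal (h x)) Set.univ = ENNReal.ofReal (∫ x, h x) := by
  rw [withDensity_apply _ MeasurableSet.univ, setLIntegral_univ,
    ofReal_integral_eq_lintegral_ofReal (hh.int hρ) (Eventually.of_forall fun x => (hh.2.1 x).le)]

lemma dens_prob {n : ℕ} {ρ : ℝ} (hρ : 0 < ρ) {h : Eu n → ℝ} (hh : GD ρ h) :
    IsProbabilityMeasure (((volume.withDensity fun x => ENNReal.ofReal (h x)) Set.univ)⁻¹ •
      volume.withDensity fun x => ENNReal.ofReal (h x)) := by
  constructor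
  rw [Measure.smul_apply, smul_eq_mul, dens_univ hρ hh]
  apply ENNReal.inv_mul_cancel
  · simpa using int_pos (hh.int hρ) hh.2.1
  · exact ENNReal.ofReal_ne_top

lemma dens_int {n : ℕ} {ρ : ℝ} (hρ : 0 < ρ) {h : Eu n → ℝ} (hh : GD ρ h) (φ : Eu n → ℝ) :
    ∫ x, φ x ∂(((volume.withDensity fun x => ENNReal.ofReal (h x)) Set.univ)⁻¹ •
      volume.withDensity fun x => ENNReal.ofReal (h x)) = ∫ x, ((∫ x, h x)⁻¹ * h x) * φ x := by
  have p := int_pos (hh.int hρ) hh.2.1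
  rw [integral_smul_measure, dens_univ hρ hh, integral_withDensity_eq_integral_toReal_smul
    hh.1.ennreal_ofReal (Eventually.of_forall fun x => ENNReal.ofReal_lt_top), ENNReal.toReal_inv,
    ENNReal.toReal_ofReal p.le, smul_eq_mul, ← integral_const_mul]
  congr 1; ext x
  rw [ENNReal.toReal_ofReal (hh.2.1 x).le, smul_eq_mul, mul_assoc]

lemma gd_of_conv {n : ℕ} {ρ : ℝ} {V : Eu n → ℝ} (hV : Continuous V)
    (hconv : ConvexOn ℝ Set.univ (fun x : Eu n => V x - ρ / 2 * ‖x‖ ^ 2)) :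
    GD ρ fun x => Real.exp (-(V x)) := by
  refine ⟨by fun_prop, fun x => Real.exp_pos _, ?_⟩
  have hc : Continuous fun x : Eu n => V x - ρ / 2 * ‖x‖ ^ 2 := by fun_prop
  obtain ⟨l, c, h1, -⟩ := hconv.exists_affine_le_of_lt (𝕜 := ℝ) (x := 0)
    (a := (V 0 - ρ / 2 * ‖(0 : Eu n)‖ ^ 2) - 1) (Set.mem_univ 0) (by linarith) isClosed_univ
    (hc.lowerSemicontinuous.lowerSemicontinuousOn _)
  refine ⟨Real.exp (-c), ‖l‖, fun y => ?_⟩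
  have h2 := h1 ⟨y, Set.mem_univ y⟩
  simp at h2
  have h3 := l.le_opNorm y
  rw [Real.norm_eq_abs] at h3
  have h4 := neg_abs_le (l y)
  rw [← Real.exp_add, Real.exp_le_exp]
  linarith

lemma lc_of_conv {n : ℕ} {ρ : ℝ} {V : Eu n → ℝ}
    (hconv : ConvexOn ℝ Set.univ (fun x : Eu n => V x - ρ / 2 * ‖x‖ ^ 2)) :
    LC ρ fun x => Real.exp (-(V x)) := by
  intro u v
  have h := hconv.2 (Set.mem_univ u) (Set.mem_univ v) (show (0 : ℝ) ≤ 1 / 2 by norm_num)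
    (show (0 : ℝ) ≤ 1 / 2 by norm_num) (by norm_num)
  simp only [← smul_add, smul_eq_mul] at h
  simp only [← Real.exp_add]
  rw [← Real.exp_nat_mul, Real.exp_le_exp]
  push_cast
  linarith

lemma gauss_gd {n : ℕ} {ρ : ℝ} : GD ρ fun x : Eu n => Real.exp (-ρ * ‖x‖ ^ 2 / 2) := by
  refine ⟨by fun_prop, fun x => Real.exp_pos _, 1, 0, fun y => ?_⟩
  rw [one_mul, Real.exp_le_exp]
  apply le_of_eq; ring

lemma gauss_lx {n : ℕ} {ρ : ℝ} : LX ρ fun x : Eu n => Real.exp (-ρ * ‖x‖ ^ 2 / 2) := by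
  intro u v
  simp only [← Real.exp_add]
  rw [← Real.exp_nat_mul, Real.exp_le_exp]
  apply le_of_eq; push_cast; ring

theorem caffarelli {n : ℕ} {ρ : ℝ} (hρ : 0 < ρ) {V : Eu n → ℝ} (hV : Continuous V)
    (hconv : ConvexOn ℝ Set.univ (fun x : Eu n => V x - ρ / 2 * ‖x‖ ^ 2))
    (μ : Measure (Eu n))
    (hμ : μ = volume.withDensity fun x => ENNReal.ofReal (Real.exp (-(V x)))) :
    0 < μ Set.univ ∧ μ Set.univ < ⊤ ∧ ∃ T : Eu n → Eu n, LipschitzWith 1 T ∧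
      (gaussRho n ρ).map T = (μ Set.univ)⁻¹ • μ := by
  have hw := gd_of_conv hV hconv
  have hN := gauss_gd (n := n) (ρ := ρ)
  have pw := int_pos (hw.int hρ) hw.2.1
  have pN := int_pos (hN.int hρ) hN.2.1
  refine ⟨?_, ?_, ?_⟩
  · rw [hμ, dens_univ hρ hw]; simpa using pw
  · rw [hμ, dens_univ hρ hw]; exact ENNReal.ofReal_lt_top
  · rw [hμ]
    have := dens_prob hρ hw
    have := dens_prob hρ hN
    unfold gaussRho
    apply limit_map
    intro ε hε
    obtain ⟨T, h1, h2⟩ := approx_caff hρ (hN.scale (inv_pos.2 pN)) (hw.scale (inv_pos.2 pw))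
      (by rw [integral_const_mul, inv_mul_cancel₀ pN.ne'])
      (by rw [integral_const_mul, inv_mul_cancel₀ pw.ne'])
      (gauss_lx.scale _) ((lc_of_conv hconv).scale _) ε hε
    refine ⟨T, h1, fun φ h3 h4 => ?_⟩
    rw [dens_int hρ hw, dens_int hρ hN (fun x => φ (T x))]
    exact h2 φ h3 h4

lemma ll_bdd {n : ℕ} {f : Eu n → ℝ} (hf : LocallyLipschitz f) (x : Eu n) :
    IsBoundedUnder (· ≤ ·) (𝓝[≠] x) (fun y => |f y - f x| / dist y x) := by
  obtain ⟨K, t, ht, hK⟩ := hf x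
  refine ⟨K, ?_⟩
  rw [eventually_map]
  filter_upwards [nhdsWithin_le_nhds ht] with y hy
  apply div_le_of_le_mul₀ dist_nonneg K.2
  have := hK.dist_le_mul y hy x (mem_of_mem_nhds ht)
  rwa [Real.dist_eq] at this

lemma ll_lt {n : ℕ} {f : Eu n → ℝ} (hf : LocallyLipschitz f) {x : Eu n} {c : ℝ}
    (h : localLip f x < c) : ∀ᶠ y in 𝓝 x, |f y - f x| ≤ c * dist y x := by
  have h1 := eventually_lt_of_limsup_lt h (ll_bdd hf x)
  rw [eventually_nhdsWithin_iff] at h1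
  filter_upwards [h1] with y hy
  by_cases hyx : y = x
  · subst hyx; simp
  · have := (hy hyx).le
    rwa [div_le_iff₀ (dist_pos.2 hyx)] at this

lemma ll_nonneg {n : ℕ} [Nontrivial (Eu n)] {f : Eu n → ℝ} (hf : LocallyLipschitz f) (x : Eu n) :
    0 ≤ localLip f x := by
  unfold localLip
  apply le_limsup_of_frequently_le _ (ll_bdd hf x)
  exact (Eventually.of_forall fun y => by positivity).frequently

lemma ll_le {n : ℕ} [Nontrivial (Eu n)] {f : Eu n → ℝ} {x : Eu n} {c : ℝ} (hc : 0 ≤ c)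
    (h : ∀ᶠ y in 𝓝 x, |f y - f x| ≤ c * dist y x) : localLip f x ≤ c := by
  unfold localLip
  apply limsup_le_of_le
  · exact isCoboundedUnder_le_of_le _ (x := 0) (fun y => by positivity)
  · filter_upwards [nhdsWithin_le_nhds h] with y hy
    exact div_le_of_le_mul₀ dist_nonneg hc hy

lemma ll_comp {n : ℕ} [Nontrivial (Eu n)] {f : Eu n → ℝ} (hf : LocallyLipschitz f)
    {T : Eu n → Eu n} (hT : LipschitzWith 1 T) (x : Eu n) :
    localLip (f ∘ T) x ≤ localLip f (T x) := by
  apply le_of_forall_gt_imp_ge_of_dense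
  intro c hc
  have c0 : 0 ≤ c := (ll_nonneg hf (T x)).trans hc.le
  apply ll_le c0
  filter_upwards [hT.continuous.continuousAt.eventually (ll_lt hf hc)] with y hy
  refine hy.trans ?_
  have := hT.dist_le_mul y x
  rw [NNReal.coe_one, one_mul] at this
  gcongr

lemma ll_sum {n : ℕ} [Nontrivial (Eu n)] {ι : Type*} [Fintype ι] {f : ι → Eu n → ℝ}
    (hf : ∀ i, LocallyLipschitz (f i)) (c : ι → ℝ) (x : Eu n) :
    localLip (fun y => ∑ i, c i * f i y) x ≤ ∑ i, |c i| * localLip (f i) x := by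
  apply _root_.le_of_forall_pos_le_add
  intro δ hδ
  set S := ∑ i, |c i| with hS
  have S0 : 0 ≤ S := Finset.sum_nonneg fun i _ => abs_nonneg _
  set ε := δ / (1 + S) with hε
  have ε0 : 0 < ε := by positivity
  have hle : ε * S ≤ δ := by
    rw [hε, div_mul_eq_mul_div, div_le_iff₀ (by positivity)]; nlinarith
  have h0 : ∑ i, |c i| * (localLip (f i) x + ε) ≤ ∑ i, |c i| * localLip (f i) x + δ := by
    simp only [mul_add, Finset.sum_add_distrib, ← Finset.sum_mul]
    rw [← hS]; linarith
  refine le_trans (ll_le ?_ ?_) h0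
  · exact Finset.sum_nonneg fun i _ => mul_nonneg (abs_nonneg _)
      (add_nonneg (ll_nonneg (hf i) x) ε0.le)
  · have hall : ∀ᶠ y in 𝓝 x, ∀ i, |f i y - f i x| ≤ (localLip (f i) x + ε) * dist y x :=
      eventually_all.2 fun i => ll_lt (hf i) (by linarith)
    filter_upwards [hall] with y hy
    rw [← Finset.sum_sub_distrib, Finset.sum_mul]
    refine (Finset.abs_sum_le_sum_abs _ _).trans (Finset.sum_le_sum fun i _ => ?_)
    rw [← mul_sub, abs_mul, mul_assoc]
    exact mul_le_mul_of_nonneg_left (hy i) (abs_nonneg _)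

lemma ll_meas {n : ℕ} [Nontrivial (Eu n)] {f : Eu n → ℝ} (hf : LocallyLipschitz f) :
    Measurable (localLip f) := by
  apply measurable_of_Iio
  intro c
  have e : localLip f ⁻¹' Set.Iio c = ⋃ q : {q : ℚ // (0 : ℝ) ≤ q ∧ (q : ℝ) < c}, ⋃ m : ℕ,
      ⋂ y : Eu n, {x | 1 / ((m : ℝ) + 1) ≤ dist y x} ∪ {x | |f y - f x| ≤ (q : ℚ) * dist y x} := by
    ext x
    simp only [Set.mem_preimage, Set.mem_Iio, Set.mem_iUnion, Set.mem_iInter, Set.mem_union,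
      Set.mem_ofPred_eq]
    constructor
    · intro h
      obtain ⟨q, h1, h2⟩ := exists_rat_btwn h
      have h3 := ll_lt hf h1
      rw [Metric.eventually_nhds_iff] at h3
      obtain ⟨ε, hε, h3⟩ := h3
      obtain ⟨m, hm⟩ := exists_nat_one_div_lt hε
      refine ⟨⟨q, ((ll_nonneg hf x).trans h1.le), h2⟩, m, fun y => ?_⟩
      rcases le_or_gt (1 / ((m : ℝ) + 1)) (dist y x) with h | h
      · exact Or.inl h
      · exact Or.inr (h3 (h.trans hm))
    · rintro ⟨⟨q, h1, h2⟩, m, h⟩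
      refine lt_of_le_of_lt (ll_le h1 ?_) h2
      rw [Metric.eventually_nhds_iff]
      refine ⟨1 / ((m : ℝ) + 1), by positivity, fun y hy => ?_⟩
      rcases h y with h | h
      · exact absurd hy (not_lt.2 h)
      · exact h
  rw [e]
  have fc := hf.continuous
  refine MeasurableSet.iUnion fun q => MeasurableSet.iUnion fun m => IsClosed.measurableSet ?_
  refine isClosed_iInter fun y => IsClosed.union ?_ ?_
  · exact isClosed_le (by fun_prop) (by fun_prop)
  · exact isClosed_le (by fun_prop) (by fun_prop)

lemma int_of_lint {α : Type*} [MeasurableSpace α] {μ : Measure α} {g : α → ℝ} (hg : Measurable g)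
    (h : ∫⁻ x, ENNReal.ofReal ((g x) ^ 2) ∂μ < ⊤) : Integrable (fun x => (g x) ^ 2) μ := by
  refine ⟨(hg.pow_const 2).aestronglyMeasurable, ?_⟩
  rw [hasFiniteIntegral_iff_ofReal (Eventually.of_forall fun x => sq_nonneg _)]
  exact h

lemma w12_int {n : ℕ} [Nontrivial (Eu n)] {μ : Measure (Eu n)} {f : Eu n → ℝ} (hf : memW12Lip μ f) :
    Integrable (fun x => (f x) ^ 2) μ ∧ Integrable (fun x => (localLip f x) ^ 2) μ := by
  obtain ⟨h1, h2⟩ := hf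
  rw [ENNReal.add_lt_top] at h2
  exact ⟨int_of_lint h1.continuous.measurable h2.1, int_of_lint (ll_meas h1) h2.2⟩

/-- Rayleigh quotients are bounded on finite dimensional spaces. -/
lemma ray_bdd {n : ℕ} [Nontrivial (Eu n)] {μ : Measure (Eu n)}
    (hpos : ∀ f : Eu n → ℝ, Continuous f → f =ᵐ[μ] 0 → f = 0)
    (F : Submodule ℝ (Eu n → ℝ)) [FiniteDimensional ℝ F] (hF : ∀ f ∈ F, memW12Lip μ f) :
    ∃ C : ℝ, ∀ f ∈ F, ∫ x, (localLip f x) ^ 2 ∂μ ≤ C * ∫ x, (f x) ^ 2 ∂μ := by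
  have hmem : ∀ f : F, MemLp (f : Eu n → ℝ) 2 μ := fun f =>
    (memLp_two_iff_integrable_sq (hF f f.2).1.continuous.aestronglyMeasurable).2 (w12_int (hF f f.2)).1
  let Φ : F →ₗ[ℝ] Lp ℝ 2 μ :=
    { toFun := fun f => (hmem f).toLp _
      map_add' := fun f g => rfl
      map_smul' := fun a f => rfl }
  have hΦ : Function.Injective Φ := by
    rw [← LinearMap.ker_eq_bot, LinearMap.ker_eq_bot']
    intro f hf
    have h1 : (f : Eu n → ℝ) =ᵐ[μ] 0 := by
      have h2 := (hmem f).coeFn_toLp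
      have h3 : ((hmem f).toLp _ : Lp ℝ 2 μ) = 0 := hf
      rw [h3] at h2
      exact h2.symm.trans (Lp.coeFn_zero _ _ _)
    exact Subtype.ext (hpos _ (hF f f.2).1.continuous h1)
  have hnorm : ∀ f : F, ‖Φ f‖ ^ 2 = ∫ x, ((f : Eu n → ℝ) x) ^ 2 ∂μ := by
    intro f
    rw [← real_inner_self_eq_norm_sq, L2.inner_def]
    apply integral_congr_ae
    filter_upwards [(hmem f).coeFn_toLp] with x hx
    change inner ℝ (((hmem f).toLp _ : Lp ℝ 2 μ) x) (((hmem f).toLp _ : Lp ℝ 2 μ) x) = _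
    rw [hx]; simp [sq]
  set B := Module.finBasis ℝ F
  let Ψ : (Fin (Module.finrank ℝ F) → ℝ) →ₗ[ℝ] Lp ℝ 2 μ := Φ ∘ₗ B.equivFun.symm.toLinearMap
  have hΨ : LinearMap.ker Ψ = ⊥ := by
    rw [LinearMap.ker_eq_bot]
    exact hΦ.comp B.equivFun.symm.injective
  obtain ⟨K, hK, hA⟩ := Ψ.exists_antilipschitzWith hΨ
  set M := ∫ x, ∑ i, (localLip (B i : Eu n → ℝ) x) ^ 2 ∂μ with hM
  have hMi : Integrable (fun x => ∑ i, (localLip (B i : Eu n → ℝ) x) ^ 2) μ :=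
    integrable_finsetSum _ fun i _ => (w12_int (hF _ (B i).2)).2
  have M0 : 0 ≤ M := integral_nonneg fun x => Finset.sum_nonneg fun i _ => sq_nonneg _
  refine ⟨Module.finrank ℝ F * K ^ 2 * M, fun f hf => ?_⟩
  set c := B.equivFun ⟨f, hf⟩ with hc
  have e1 : Ψ c = Φ ⟨f, hf⟩ := by simp [Ψ, hc]
  have n1 : ‖c‖ ≤ K * ‖Φ ⟨f, hf⟩‖ := by
    have := hA.le_mul_dist c 0
    rwa [map_zero, dist_zero_right, dist_zero_right, e1] at this
  have n2 : ∑ i, (c i) ^ 2 ≤ Module.finrank ℝ F * (K ^ 2 * ∫ x, (f x) ^ 2 ∂μ) := by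
    rw [← hnorm ⟨f, hf⟩, ← mul_pow]
    have : ∀ i ∈ Finset.univ, (c i) ^ 2 ≤ (K * ‖Φ ⟨f, hf⟩‖) ^ 2 := fun i _ => by
      rw [← sq_abs (c i)]
      have := norm_le_pi_norm c i
      rw [Real.norm_eq_abs] at this
      exact pow_le_pow_left₀ (abs_nonneg _) (this.trans n1) 2
    simpa using Finset.sum_le_card_nsmul _ _ _ this
  have ef : f = fun y => ∑ i, c i * (B i : Eu n → ℝ) y := by
    have := B.sum_equivFun ⟨f, hf⟩
    have := congrArg (Subtype.val) this
    ext y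
    have h2 := congrFun this y
    refine h2.symm.trans ?_
    rw [Submodule.coe_sum, Finset.sum_apply]
    rfl
  have pt : ∀ x, (localLip f x) ^ 2 ≤ (∑ i, (c i) ^ 2) * ∑ i, (localLip (B i : Eu n → ℝ) x) ^ 2 := by
    intro x
    have h1 := ll_sum (fun i => (hF _ (B i).2).1) c x
    rw [← ef] at h1
    have h2 := ll_nonneg (hF f hf).1 x
    have h3 := Finset.sum_mul_sq_le_sq_mul_sq Finset.univ (fun i => |c i|)
      (fun i => localLip (B i : Eu n → ℝ) x)
    simp only [sq_abs] at h3
    exact (pow_le_pow_left₀ h2 h1 2).trans h3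
  calc ∫ x, (localLip f x) ^ 2 ∂μ ≤
      ∫ x, (∑ i, (c i) ^ 2) * ∑ i, (localLip (B i : Eu n → ℝ) x) ^ 2 ∂μ :=
        integral_mono (w12_int (hF f hf)).2 (hMi.const_mul _) pt
    _ = (∑ i, (c i) ^ 2) * M := integral_const_mul _ _
    _ ≤ Module.finrank ℝ F * (K ^ 2 * ∫ x, (f x) ^ 2 ∂μ) * M := by gcongr
    _ = _ := by ring

lemma bl_w12 {n : ℕ} [Nontrivial (Eu n)] {μ : Measure (Eu n)} [IsFiniteMeasure μ] {f : Eu n → ℝ}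
    (h : ∃ C K : ℝ, ∀ x, |f x| ≤ C ∧ ∀ y, |f y - f x| ≤ K * dist y x) : memW12Lip μ f := by
  obtain ⟨C, K, h⟩ := h
  have hl : LipschitzWith K.toNNReal f := LipschitzWith.of_dist_le_mul fun x y => by
    rw [Real.dist_eq]
    refine ((h y).2 x).trans ?_
    gcongr; exact Real.le_coe_toNNReal K
  refine ⟨hl.locallyLipschitz, ?_⟩
  rw [ENNReal.add_lt_top]
  constructor
  · calc _ ≤ ∫⁻ _, ENNReal.ofReal (C ^ 2) ∂μ := by
          apply lintegral_mono; intro x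
          apply ENNReal.ofReal_le_ofReal
          rw [← sq_abs (f x)]
          exact pow_le_pow_left₀ (abs_nonneg _) (h x).1 2
      _ < ⊤ := by rw [lintegral_const]; exact ENNReal.mul_lt_top ENNReal.ofReal_lt_top (measure_lt_top _ _)
  · calc _ ≤ ∫⁻ _, ENNReal.ofReal ((K.toNNReal : ℝ) ^ 2) ∂μ := by
          apply lintegral_mono; intro x
          apply ENNReal.ofReal_le_ofReal
          refine pow_le_pow_left₀ (ll_nonneg hl.locallyLipschitz x) (ll_le (NNReal.coe_nonneg _) ?_) 2
          exact Eventually.of_forall fun y => by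
            have := hl.dist_le_mul y x
            rwa [Real.dist_eq] at this
      _ < ⊤ := by rw [lintegral_const]; exact ENNReal.mul_lt_top ENNReal.ofReal_lt_top (measure_lt_top _ _)

lemma exists_sub {n : ℕ} [Nontrivial (Eu n)] (μ : Measure (Eu n)) [IsFiniteMeasure μ] (k : ℕ) :
    ∃ F : Submodule ℝ (Eu n → ℝ), Module.finrank ℝ F = k ∧ ∀ f ∈ F, memW12Lip μ f := by
  obtain ⟨e, he⟩ := exists_norm_eq (Eu n) (zero_le_one (α := ℝ))
  set p : Fin k → Eu n := fun j => ((j : ℕ) : ℝ) • e with hp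
  set f : Fin k → Eu n → ℝ := fun j x => max 0 (1 - dist x (p j)) with hf
  have fii : ∀ i, f i (p i) = 1 := by intro i; simp [hf]
  have fij : ∀ i j, i ≠ j → f j (p i) = 0 := by
    intro i j hij
    simp only [hf]
    apply max_eq_left
    rw [dist_eq_norm, hp]
    simp only
    rw [← sub_smul, norm_smul, he, mul_one, Real.norm_eq_abs, sub_nonpos]
    have h1 : ((i : ℕ) : ℤ) - ((j : ℕ) : ℤ) ≠ 0 := by
      intro h; apply hij; apply Fin.ext; omega
    have := Int.one_le_abs h1
    exact_mod_cast this
  have li : LinearIndependent ℝ f := by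
    rw [Fintype.linearIndependent_iff]
    intro g hg i
    have h1 := congrFun hg (p i)
    rw [Finset.sum_apply, Finset.sum_eq_single i] at h1
    · simpa [fii] using h1
    · intro j _ hj
      simp [fij i j hj.symm]
    · simp
  refine ⟨Submodule.span ℝ (Set.range f), ?_, fun g hg => bl_w12 ?_⟩
  · rw [finrank_span_eq_card li, Fintype.card_fin]
  · induction hg using Submodule.span_induction with
    | mem g hg =>
      obtain ⟨j, rfl⟩ := hg
      refine ⟨1, 1, fun x => ⟨?_, fun y => ?_⟩⟩
      · rw [abs_of_nonneg (le_max_left _ _)]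
        exact max_le zero_le_one (by linarith [dist_nonneg (x := x) (y := p j)])
      · simp only [hf]
        refine (abs_max_sub_max_le_max _ _ _ _).trans ?_
        rw [sub_self, abs_zero, one_mul]
        refine max_le dist_nonneg ?_
        have := abs_dist_sub_le x y (p j)
        rw [dist_comm y x]
        have e : 1 - dist y (p j) - (1 - dist x (p j)) = dist x (p j) - dist y (p j) := by ring
        rw [e]
        exact this
    | zero => exact ⟨0, 0, by simp⟩
    | add a b _ _ ha hb =>
      obtain ⟨C, K, h⟩ := ha
      obtain ⟨C', K', h'⟩ := hb
      refine ⟨C + C', K + K', fun x => ⟨(abs_add_le _ _).trans (add_le_add (h x).1 (h' x).1),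
        fun y => ?_⟩⟩
      have e : (a + b) y - (a + b) x = (a y - a x) + (b y - b x) := by simp; ring
      rw [e, add_mul]
      exact (abs_add_le _ _).trans (add_le_add ((h x).2 y) ((h' x).2 y))
    | smul t a _ ha =>
      obtain ⟨C, K, h⟩ := ha
      refine ⟨|t| * C, |t| * K, fun x => ⟨?_, fun y => ?_⟩⟩
      · rw [Pi.smul_apply, smul_eq_mul, abs_mul]
        exact mul_le_mul_of_nonneg_left (h x).1 (abs_nonneg _)
      · rw [Pi.smul_apply, Pi.smul_apply, smul_eq_mul, smul_eq_mul, ← mul_sub, abs_mul, mul_assoc]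
        exact mul_le_mul_of_nonneg_left ((h x).2 y) (abs_nonneg _)

/-- **Spectral comparison for positively curved Euclidean weighted spaces**
(Caffarelli + Contraction Principle): if `μ = exp(-V) dx` with `V` smooth and
`∇²V ≥ ρ·Id` (i.e. `x ↦ V(x) - (ρ/2)|x|²` convex), `ρ > 0`, then
`λ_k^Lip(ℝⁿ,|·|,μ) ≥ λ_k^Lip(ℝⁿ,|·|,γ_ρⁿ)` for all `k ≥ 1`. -/
theorem spectral_comparison_log_concave
    (n : ℕ) (hn : 1 ≤ n) (ρ : ℝ) (hρ : 0 < ρ)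
    (V : EuclideanSpace ℝ (Fin n) → ℝ) (hV : ContDiff ℝ (⊤ : ℕ∞) V)
    (hconv : ConvexOn ℝ Set.univ (fun x : EuclideanSpace ℝ (Fin n) => V x - ρ / 2 * ‖x‖ ^ 2))
    (μ : Measure (EuclideanSpace ℝ (Fin n)))
    (hμ : μ = volume.withDensity fun x => ENNReal.ofReal (Real.exp (-(V x))))
    (k : ℕ) (hk : 1 ≤ k) :
    lambdaLip (gaussRho n ρ) k ≤ lambdaLip μ k := by
  obtain ⟨m0, mt, T, hT, hmap⟩ := caffarelli hρ hV.continuous hconv μ hμ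
  haveI : Nontrivial (Eu n) := by
    haveI : Nonempty (Fin n) := Fin.pos_iff_nonempty.1 hn
    infer_instance
  haveI : IsFiniteMeasure μ := ⟨mt⟩
  have vac : (volume : Measure (Eu n)) ≪ μ := by
    rw [hμ]
    refine withDensity_absolutelyContinuous' ?_ ?_
    · exact (ENNReal.measurable_ofReal.comp
        (Real.continuous_exp.comp hV.continuous.neg).measurable).aemeasurable
    · refine Eventually.of_forall fun x => ?_
      rw [ne_eq, ENNReal.ofReal_eq_zero, not_le]
      exact Real.exp_pos _
  have hpos : ∀ f : Eu n → ℝ, Continuous f → f =ᵐ[μ] 0 → f = 0 := by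
    intro f hf h
    exact (Continuous.ae_eq_iff_eq (volume : Measure (Eu n)) hf continuous_zero).1 (vac.ae_eq h)
  have Tm : Measurable T := hT.continuous.measurable
  set γ := gaussRho n ρ with hγ
  set m := (μ Set.univ)⁻¹ with hm
  have mm0 : m ≠ 0 := ENNReal.inv_ne_zero.2 mt.ne
  have mmt : m ≠ ⊤ := ENNReal.inv_ne_top.2 m0.ne'
  have mr : 0 < m.toReal := ENNReal.toReal_pos mm0 mmt
  have lin : ∀ g : Eu n → ℝ≥0∞, Measurable g → ∫⁻ x, g (T x) ∂γ = m * ∫⁻ x, g x ∂μ := by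
    intro g hg
    rw [← lintegral_map hg Tm, hmap, lintegral_smul_measure, smul_eq_mul]
  have bin : ∀ g : Eu n → ℝ, Measurable g → ∫ x, g (T x) ∂γ = m.toReal * ∫ x, g x ∂μ := by
    intro g hg
    rw [← integral_map Tm.aemeasurable hg.aestronglyMeasurable, hmap, integral_smul_measure,
      smul_eq_mul]
  have w12 : ∀ f : Eu n → ℝ, memW12Lip μ f → memW12Lip γ (f ∘ T) := by
    intro f hf
    obtain ⟨h1, h2⟩ := ENNReal.add_lt_top.1 hf.2
    refine ⟨hf.1.comp hT.locallyLipschitz, ENNReal.add_lt_top.2 ⟨?_, ?_⟩⟩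
    · have := lin (fun x => ENNReal.ofReal ((f x) ^ 2))
        ((hf.1.continuous.measurable.pow_const 2).ennreal_ofReal)
      simp only [Function.comp]
      rw [this]
      exact ENNReal.mul_lt_top mmt.lt_top h1
    · have := lin (fun x => ENNReal.ofReal ((localLip f x) ^ 2))
        (((ll_meas hf.1).pow_const 2).ennreal_ofReal)
      refine lt_of_le_of_lt (lintegral_mono fun x => ?_)
        (this.trans_lt (ENNReal.mul_lt_top mmt.lt_top h2))
      exact ENNReal.ofReal_le_ofReal (pow_le_pow_left₀
        (ll_nonneg (hf.1.comp hT.locallyLipschitz) x) (ll_comp hf.1 hT x) 2)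
  have ib : ∀ f : Eu n → ℝ, memW12Lip μ f →
      ∫ x, ((f ∘ T) x) ^ 2 ∂γ = m.toReal * ∫ x, (f x) ^ 2 ∂μ := fun f hf =>
    bin (fun x => (f x) ^ 2) (hf.1.continuous.measurable.pow_const 2)
  have il : ∀ f : Eu n → ℝ, memW12Lip μ f →
      ∫ x, (localLip (f ∘ T) x) ^ 2 ∂γ ≤ m.toReal * ∫ x, (localLip f x) ^ 2 ∂μ := by
    intro f hf
    have mL := (ll_meas hf.1).pow_const 2
    rw [← bin (fun x => (localLip f x) ^ 2) mL]
    refine integral_mono (w12_int (w12 f hf)).2 ?_ fun x => ?_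
    · have h1 : Integrable (fun x => (localLip f x) ^ 2) (γ.map T) := by
        rw [hmap]
        exact (w12_int hf).2.smul_measure mmt
      exact h1.comp_measurable Tm
    · exact pow_le_pow_left₀
        (ll_nonneg (hf.1.comp hT.locallyLipschitz) x) (ll_comp hf.1 hT x) 2
  unfold lambdaLip
  apply le_csInf
  · obtain ⟨F, h1, h2⟩ := exists_sub μ k
    exact ⟨_, F, h1, h2, rfl⟩
  rintro a ⟨F, hFk, hF, rfl⟩
  haveI : FiniteDimensional ℝ F := Module.finite_of_finrank_pos (by omega)
  obtain ⟨C, hC⟩ := ray_bdd hpos F hF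
  set Φ : F →ₗ[ℝ] (Eu n → ℝ) := (LinearMap.funLeft ℝ ℝ T).domRestrict F with hΦ
  have Φa : ∀ f : F, Φ f = (f : Eu n → ℝ) ∘ T := fun f => rfl
  have inj : Function.Injective Φ := by
    rw [← LinearMap.ker_eq_bot, LinearMap.ker_eq_bot']
    intro f hf
    have hfc := (hF f f.2).1.continuous
    have h0 := ib f (hF f f.2)
    rw [← Φa, hf] at h0
    have h1 : ∫ x, ((f : Eu n → ℝ) x) ^ 2 ∂μ = 0 := by
      have e : ∫ x, ((0 : Eu n → ℝ) x) ^ 2 ∂γ = 0 := by simp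
      rw [e] at h0
      exact (mul_eq_zero.1 h0.symm).resolve_left mr.ne'
    rw [integral_eq_zero_iff_of_nonneg (fun x => sq_nonneg _) (w12_int (hF f f.2)).1] at h1
    apply Subtype.ext
    apply hpos _ hfc
    filter_upwards [h1] with x hx
    simpa using hx
  have hle : sSup { r : ℝ | ∃ f ∈ LinearMap.range Φ, (∫ x, (f x) ^ 2 ∂γ) ≠ 0 ∧
      r = (∫ x, (localLip f x) ^ 2 ∂γ) / (∫ x, (f x) ^ 2 ∂γ) } ≤
      sSup { r : ℝ | ∃ f ∈ F, (∫ x, (f x) ^ 2 ∂μ) ≠ 0 ∧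
      r = (∫ x, (localLip f x) ^ 2 ∂μ) / (∫ x, (f x) ^ 2 ∂μ) } := by
    apply Real.sSup_le
    · rintro r ⟨g, ⟨f, rfl⟩, hg, rfl⟩
      rw [Φa, ib f (hF f f.2)] at hg
      rw [Φa, ib f (hF f f.2)]
      have hf0 : ∫ x, ((f : Eu n → ℝ) x) ^ 2 ∂μ ≠ 0 := right_ne_zero_of_mul hg
      refine le_trans ?_ (le_csSup ?_ ⟨f, f.2, hf0, rfl⟩)
      · rw [← mul_div_mul_left _ (∫ x, ((f : Eu n → ℝ) x) ^ 2 ∂μ) mr.ne']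
        exact div_le_div_of_nonneg_right (il f (hF f f.2))
          (mul_nonneg mr.le (integral_nonneg fun x => sq_nonneg _))
      · refine ⟨C, ?_⟩
        rintro r ⟨g, hg, hg0, rfl⟩
        have : 0 < ∫ x, (g x) ^ 2 ∂μ :=
          lt_of_le_of_ne (integral_nonneg fun x => sq_nonneg _) hg0.symm
        rw [div_le_iff₀ this]
        exact hC g hg
    · apply Real.sSup_nonneg
      rintro r ⟨f, -, -, rfl⟩
      exact div_nonneg (integral_nonneg fun x => sq_nonneg _) (integral_nonneg fun x => sq_nonneg _)
  refine le_trans (csInf_le ⟨0, ?_⟩ ⟨LinearMap.range Φ, ?_, ?_, rfl⟩) hle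
  · rintro a ⟨G, -, -, rfl⟩
    apply Real.sSup_nonneg
    rintro r ⟨f, -, -, rfl⟩
    exact div_nonneg (integral_nonneg fun x => sq_nonneg _) (integral_nonneg fun x => sq_nonneg _)
  · rw [LinearMap.finrank_range_of_inj inj, hFk]
  · rintro g ⟨f, rfl⟩
    exact w12 f (hF f f.2)
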